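/- arXiv:1304.3862 — 7 statements merged into one kernel-verified Lean document; each statement's English description precedes it below -/
import Mathlib

section
/- Let K ≥ 1 and L ≥ 1 be integers and let c_k be the sequence of polynomials defined by c_0 = 0, c_1 = 1 and c_{k+1}(z) = z·c_k(z) − c_{k−1}(z). Suppose z ∈ ℂ and Γ_0, Γ_1, …, Γ_L ∈ ℂ satisfy the recursion relations Γ_0·(z + K·Γ_0 + Γ_1) = −1, Γ_p·(z + Γ_{p+1}) = −1 for 1 ≤ p ≤ L−1, and Γ_L·(z + Γ_0) = −1. Then Γ_0 satisfies the cubic equation K·c_L(z)·Γ_0³ + (K+1)·c_{L+1}(z)·Γ_0² + z·c_{L+1}(z)·Γ_0 + c_{L+1}(z) = 0. -/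
/-!
The polynomial `c k` is the rescaled Chebyshev polynomial `S (k - 1)` of the second kind. Each
relation `Γ p * (z + Γ (p + 1)) = -1` says that `Γ p` is the image of `Γ (p + 1)` under the Möbius
map `w ↦ -1 / (z + w)`, whose `n`-th iterate has the matrix
`!![-S (n - 2), -S (n - 1); S (n - 1), S n]`. Following the cycle from `Γ 1` through `Γ L` to `Γ 0`
thus expresses `Γ 1` in terms of `Γ 0`, and eliminating `Γ 1` from the relation at the root gives
the cubic.
-/

section Chebyshev

open Polynomial.Chebyshev

variable {R : Type*} [CommRing R] {z : R}

theorem eval_chebyshevS_eq (z : R) (n : ℤ) :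
    (S R n).eval z = z * (S R (n - 1)).eval z - (S R (n - 2)).eval z := by
  rw [S_eq, Polynomial.eval_sub, Polynomial.eval_mul, Polynomial.eval_X]

theorem eq_eval_chebyshevS_of_recurrence {c : ℕ → R} (hc0 : c 0 = 0) (hc1 : c 1 = 1)
    (hrec : ∀ k, c (k + 2) = z * c (k + 1) - c k) (k : ℕ) :
    c k = (S R (k - 1)).eval z := by
  induction k using Nat.twoStepInduction with
  | zero => simp [hc0]
  | one => simp [hc1]
  | more k ih₀ ih₁ =>
    rw [hrec, ih₀, ih₁, eval_chebyshevS_eq z (((k + 2 : ℕ) : ℤ) - 1)]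
    push_cast
    ring_nf

/-- The relation saying that `a` is the image of `x` under the `n`-th iterate of the Möbius map
`w ↦ -1 / (z + w)`, with denominators cleared so that it makes sense in any commutative ring. -/
def IsMobiusIterate (z : R) (n : ℤ) (a x : R) : Prop :=
  a * ((S R n).eval z + (S R (n - 1)).eval z * x)
    = -((S R (n - 1)).eval z + (S R (n - 2)).eval z * x)

theorem IsMobiusIterate.succ {a x y : R} {n : ℤ} (hax : IsMobiusIterate z n a x)
    (hxy : x * (z + y) = -1) : IsMobiusIterate z (n + 1) a y := by
  have hS := eval_chebyshevS_eq z n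
  have hS_succ := eval_chebyshevS_eq z (n + 1)
  have h_index : n + 1 - 2 = n - 1 := by ring
  simp only [IsMobiusIterate, add_sub_cancel_right, h_index] at hax hS_succ ⊢
  linear_combination (z + y) * hax + a * hS_succ + hS
    - (a * (S R (n - 1)).eval z + (S R (n - 2)).eval z) * hxy

theorem IsMobiusIterate.of_chain {Γ : ℕ → R} {n : ℕ}
    (hΓ : ∀ p < n, Γ p * (z + Γ (p + 1)) = -1) : IsMobiusIterate z n (Γ 0) (Γ n) := by
  induction n with
  | zero => simp [IsMobiusIterate]
  | succ n ih =>
    exact_mod_cast (ih fun p hp ↦ hΓ p (hp.trans n.lt_succ_self)).succ (hΓ n n.lt_succ_self)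

theorem stmt_6_general {K : R} {L : ℕ} (hL : 1 ≤ L) {Γ : ℕ → R}
    (h0 : Γ 0 * (z + K * Γ 0 + Γ 1) = -1)
    (hp : ∀ p : ℕ, 1 ≤ p → p ≤ L - 1 → Γ p * (z + Γ (p + 1)) = -1)
    (hLrel : Γ L * (z + Γ 0) = -1) :
    K * (S R (L - 1)).eval z * Γ 0 ^ 3 + (K + 1) * (S R L).eval z * Γ 0 ^ 2
      + z * (S R L).eval z * Γ 0 + (S R L).eval z = 0 := by
  have hcycle : IsMobiusIterate z L (Γ 1) (Γ 0) := by
    obtain ⟨n, rfl⟩ := Nat.exists_eq_add_of_le' hL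
    have hchain : IsMobiusIterate z n (Γ 1) (Γ (n + 1)) :=
      .of_chain (Γ := fun p ↦ Γ (p + 1)) fun p hpn ↦ hp (p + 1) p.succ_pos hpn
    exact_mod_cast hchain.succ hLrel
  rw [IsMobiusIterate] at hcycle
  linear_combination ((S R L).eval z + (S R (L - 1)).eval z * Γ 0) * h0
    - Γ 0 * hcycle + Γ 0 ^ 2 * eval_chebyshevS_eq z L

end Chebyshev

/-- If `Γ_0, …, Γ_L` satisfy the Green's-function recursion relations
`Γ_0(z + KΓ_0 + Γ_1) = −1`, `Γ_p(z + Γ_{p+1}) = −1` for `1 ≤ p ≤ L−1`, and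
`Γ_L(z + Γ_0) = −1`, then `Γ_0` satisfies the cubic
`K c_L(z) Γ_0³ + (K+1) c_{L+1}(z) Γ_0² + z c_{L+1}(z) Γ_0 + c_{L+1}(z) = 0`. -/
theorem stmt_6
    (c : ℕ → ℂ → ℂ)
    (hc0 : ∀ z : ℂ, c 0 z = 0)
    (hc1 : ∀ z : ℂ, c 1 z = 1)
    (hrec : ∀ (k : ℕ) (z : ℂ), c (k + 2) z = z * c (k + 1) z - c k z)
    (K L : ℕ) (hK : 1 ≤ K) (hL : 1 ≤ L)
    (z : ℂ) (Γ : ℕ → ℂ)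
    (h0 : Γ 0 * (z + (K : ℂ) * Γ 0 + Γ 1) = -1)
    (hp : ∀ p : ℕ, 1 ≤ p → p ≤ L - 1 → Γ p * (z + Γ (p + 1)) = -1)
    (hLrel : Γ L * (z + Γ 0) = -1) :
    (K : ℂ) * c L z * (Γ 0) ^ 3 + ((K : ℂ) + 1) * c (L + 1) z * (Γ 0) ^ 2
      + z * c (L + 1) z * Γ 0 + c (L + 1) z = 0 := by
  have hc := eq_eval_chebyshevS_of_recurrence (c := (c · z)) (hc0 z) (hc1 z) fun k ↦ hrec k z
  simpa [hc] using stmt_6_general hL h0 hp hLrel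
end

section
/- Let K ≥ 1 and L ≥ 1 be integers, let c_k be the sequence of polynomials defined by c_0 = 0, c_1 = 1 and c_{k+1}(z) = z·c_k(z) − c_{k−1}(z), and for E ∈ ℝ define D_{K,L}(E) = c_{L+1}(E)²·( 18K(K+1)E·c_L(E)·c_{L+1}(E) + (K+1)²E²·c_{L+1}(E)² − 4K·E³·c_L(E)·c_{L+1}(E) − 27K²·c_L(E)² − 4(K+1)³·c_{L+1}(E)² ). Then for every E ∈ ℝ, the equation K·c_L(E)·x³ + (K+1)·c_{L+1}(E)·x² + E·c_{L+1}(E)·x + c_{L+1}(E) = 0 has a solution x ∈ ℂ with Im(x) > 0 if and only if D_{K,L}(E) < 0. -/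
/-! If a cubic factors as `(α x + β) (a x² + p x + q)`, its discriminant is the discriminant of the
quadratic factor times the square of the resultant of the two factors. A nonreal root `z` of a real
cubic provides such a factorization with quadratic factor `(x - z) (x - conj z)`, so the
discriminant is negative. Conversely, if the discriminant is negative, then either there is no real
root, or splitting off a real root leaves a quadratic with negative discriminant. Both ways a
nonconstant real polynomial without real roots divides the cubic, and one of its complex roots lies
in the upper half plane.

For the cubic at hand it remains to see that `c_L(E)` and `c_{L+1}(E)` do not both vanish. They are
values of consecutive rescaled Chebyshev polynomials `S`, and
`S_n² + S_{n+1}² - x S_n S_{n+1} = 1`. -/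

open Polynomial

lemma linear_mul_quadratic_eq_toPoly {R : Type*} [CommSemiring R] (α β a p q : R) :
    (C α * X + C β) * (C a * X ^ 2 + C p * X + C q) =
      Cubic.toPoly ⟨α * a, α * p + β * a, α * q + β * p, β * q⟩ := by
  simp only [Cubic.toPoly, C_add, C_mul]
  ring

lemma cubic_discr_eq_discrim_mul_sq {R : Type*} [CommRing R] {P : Cubic R} {α β a p q : R}
    (hP : P.toPoly = (C α * X + C β) * (C a * X ^ 2 + C p * X + C q)) :
    P.discr = discrim a p q * (a * β ^ 2 - p * α * β + q * α ^ 2) ^ 2 := by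
  rw [linear_mul_quadratic_eq_toPoly, Cubic.toPoly_injective] at hP
  subst hP
  simp only [Cubic.discr, discrim]
  ring

lemma exists_toPoly_eq_X_sub_C_mul_quadratic {R : Type*} [CommRing R] {P : Cubic R} {r : R}
    (hr : P.toPoly.IsRoot r) :
    ∃ a p q : R, P.toPoly = (X - C r) * (C a * X ^ 2 + C p * X + C q) := by
  have hd : P.d = -r * (P.c + (P.b + P.a * r) * r) := by
    simp only [Cubic.toPoly, IsRoot, eval_add, eval_mul, eval_C, eval_pow, eval_X] at hr
    linear_combination hr
  refine ⟨P.a, P.b + P.a * r, P.c + (P.b + P.a * r) * r, ?_⟩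
  simp only [Cubic.toPoly, hd, C_add, C_mul, C_neg]
  ring

lemma exists_toPoly_eq_linear_mul_of_im_ne_zero {P : Cubic ℝ} {z : ℂ}
    (hz : aeval z P.toPoly = 0) (him : z.im ≠ 0) :
    ∃ α β : ℝ, P.toPoly = (C α * X + C β) * (X ^ 2 - C (2 * z.re) * X + C (‖z‖ ^ 2)) := by
  obtain ⟨l, hl⟩ := quadratic_dvd_of_aeval_eq_zero_im_ne_zero _ hz him
  have hmonic : (X ^ 2 - C (2 * z.re) * X + C (‖z‖ ^ 2) : ℝ[X]).Monic := by monicity!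
  have hquad : (X ^ 2 - C (2 * z.re) * X + C (‖z‖ ^ 2) : ℝ[X]).natDegree = 2 := by
    compute_degree!
  have hcubic : P.toPoly.natDegree ≤ 3 := natDegree_cubic_le
  have hlinear : l.natDegree ≤ 1 := by
    rcases eq_or_ne l 0 with rfl | hl0
    · simp
    · rw [hl, hmonic.natDegree_mul' hl0, hquad] at hcubic
      lia
  obtain ⟨α, β, rfl⟩ := exists_eq_X_add_C_of_natDegree_le_one hlinear
  exact ⟨α, β, by rw [hl, mul_comm]⟩

lemma exists_aeval_eq_zero_im_pos_of_forall_not_isRoot {p : ℝ[X]} (hdeg : p.degree ≠ 0)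
    (hroot : ∀ r : ℝ, ¬ p.IsRoot r) : ∃ z : ℂ, aeval z p = 0 ∧ 0 < z.im := by
  obtain ⟨z, hz⟩ := IsAlgClosed.exists_aeval_eq_zero ℂ p hdeg
  rcases lt_trichotomy z.im 0 with hneg | hreal | hpos
  · exact ⟨starRingEnd ℂ z, by rw [aeval_conj, hz, map_zero], by simpa using hneg⟩
  · have hz_re : z = algebraMap ℝ ℂ z.re := Complex.ext rfl (by simpa using hreal)
    rw [hz_re, aeval_algebraMap_eq_zero_iff] at hz
    exact absurd hz (hroot z.re)
  · exact ⟨z, hz, hpos⟩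

lemma exists_aeval_quadratic_eq_zero_im_pos {a p q : ℝ} (h : discrim a p q < 0) :
    ∃ z : ℂ, aeval z (C a * X ^ 2 + C p * X + C q) = 0 ∧ 0 < z.im := by
  have ha : a ≠ 0 := by
    rintro rfl
    exact h.not_ge (by simpa [discrim] using sq_nonneg p)
  refine exists_aeval_eq_zero_im_pos_of_forall_not_isRoot
    (by rw [degree_quadratic ha]; decide) fun r hr ↦ ?_
  refine quadratic_ne_zero_of_discrim_ne_sq (fun s ↦ (h.trans_le (sq_nonneg s)).ne) r ?_
  simpa [sq] using hr

lemma cubic_discr_neg_of_im_ne_zero {P : Cubic ℝ} (hP : P ≠ 0) {z : ℂ}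
    (hz : aeval z P.toPoly = 0) (him : z.im ≠ 0) : P.discr < 0 := by
  obtain ⟨α, β, hfac⟩ := exists_toPoly_eq_linear_mul_of_im_ne_zero hz him
  have hnorm : ‖z‖ ^ 2 = z.re ^ 2 + z.im ^ 2 := by
    rw [Complex.sq_norm, Complex.normSq_apply]
    ring
  have hdiscrim : discrim 1 (-(2 * z.re)) (‖z‖ ^ 2) = -(2 * z.im) ^ 2 := by
    rw [discrim, hnorm]
    ring
  have hres : 1 * β ^ 2 - -(2 * z.re) * α * β + ‖z‖ ^ 2 * α ^ 2 = Complex.normSq (α * z + β) := by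
    simp only [hnorm, Complex.normSq_apply, Complex.add_re, Complex.add_im, Complex.re_ofReal_mul,
      Complex.im_ofReal_mul, Complex.ofReal_re, Complex.ofReal_im]
    ring
  have hlinear : (α * z + β : ℂ) ≠ 0 := fun h ↦ hP <| by
    have hα : α = 0 := by simpa [him] using congrArg Complex.im h
    have hβ : β = 0 := by simpa [hα] using h
    rw [← Cubic.toPoly_eq_zero_iff, hfac, hα, hβ, C_0, zero_mul, add_zero, zero_mul]
  rw [cubic_discr_eq_discrim_mul_sq (α := α) (β := β) (a := 1) (p := -(2 * z.re)) (q := ‖z‖ ^ 2)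
    (by rw [hfac, C_neg, C_1]; ring), hdiscrim, hres]
  exact mul_neg_of_neg_of_pos (neg_neg_of_pos (by positivity))
    (pow_pos (Complex.normSq_pos.mpr hlinear) 2)

lemma exists_aeval_toPoly_eq_zero_im_pos_of_discr_neg {P : Cubic ℝ} (h : P.discr < 0) :
    ∃ z : ℂ, aeval z P.toPoly = 0 ∧ 0 < z.im := by
  by_cases hroot : ∃ r : ℝ, P.toPoly.IsRoot r
  · obtain ⟨r, hr⟩ := hroot
    obtain ⟨a, p, q, hfac⟩ := exists_toPoly_eq_X_sub_C_mul_quadratic hr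
    have hdiscr := cubic_discr_eq_discrim_mul_sq (α := 1) (β := -r) (a := a) (p := p) (q := q)
      (by rw [hfac, C_1, C_neg]; ring)
    have hdiscrim : discrim a p q < 0 := neg_of_mul_neg_left (hdiscr ▸ h) (sq_nonneg _)
    obtain ⟨z, hz, him⟩ := exists_aeval_quadratic_eq_zero_im_pos hdiscrim
    exact ⟨z, by rw [hfac, map_mul, hz, mul_zero], him⟩
  · refine exists_aeval_eq_zero_im_pos_of_forall_not_isRoot (fun hdeg ↦ h.ne ?_)
      (not_exists.mp hroot)
    have hcoeff (n : ℕ) (hn : 0 < n) : P.toPoly.coeff n = 0 :=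
      coeff_eq_zero_of_degree_lt (by rw [hdeg]; exact_mod_cast hn)
    have ha : P.a = 0 := Cubic.coeff_eq_a.symm.trans (hcoeff 3 (by simp))
    have hb : P.b = 0 := Cubic.coeff_eq_b.symm.trans (hcoeff 2 (by simp))
    simp [Cubic.discr, ha, hb]

theorem exists_aeval_toPoly_eq_zero_im_pos_iff_discr_neg {P : Cubic ℝ} (hP : P ≠ 0) :
    (∃ z : ℂ, aeval z P.toPoly = 0 ∧ 0 < z.im) ↔ P.discr < 0 :=
  ⟨fun ⟨_, hz, him⟩ ↦ cubic_discr_neg_of_im_ne_zero hP hz him.ne',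
    exists_aeval_toPoly_eq_zero_im_pos_of_discr_neg⟩

section Recurrence

variable {R : Type*} [CommRing R] {x : R} {u : ℕ → R}

lemma eq_eval_S_of_recurrence (h0 : u 0 = 0) (h1 : u 1 = 1)
    (hrec : ∀ n, u (n + 2) = x * u (n + 1) - u n) (n : ℕ) :
    u n = (Chebyshev.S R (n - 1)).eval x := by
  induction n using Nat.twoStepInduction with
  | zero => simp [h0]
  | one => simp [h1]
  | more n ih ih' =>
    have hS : Chebyshev.S R (n + 1) = X * Chebyshev.S R n - Chebyshev.S R (n - 1) :=
      Chebyshev.S_add_one R n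
    rw [hrec, ih, ih']
    push_cast
    rw [add_sub_cancel_right, show (n + 2 - 1 : ℤ) = n + 1 by ring, hS]
    simp

lemma sq_add_sq_sub_mul_of_recurrence (h0 : u 0 = 0) (h1 : u 1 = 1)
    (hrec : ∀ n, u (n + 2) = x * u (n + 1) - u n) (n : ℕ) :
    u n ^ 2 + u (n + 1) ^ 2 - x * u n * u (n + 1) = 1 := by
  have hu := eq_eval_S_of_recurrence h0 h1 hrec
  have hS := congrArg (eval x) (Chebyshev.S_sq_add_S_sq R (n - 1))
  rw [hu n, hu (n + 1)]
  simpa using hS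

lemma ne_zero_of_recurrence_of_succ_eq_zero [Nontrivial R] (h0 : u 0 = 0) (h1 : u 1 = 1)
    (hrec : ∀ n, u (n + 2) = x * u (n + 1) - u n) {n : ℕ} (hn : u (n + 1) = 0) : u n ≠ 0 := by
  intro hn'
  simpa [hn, hn'] using sq_add_sq_sub_mul_of_recurrence h0 h1 hrec n

end Recurrence

theorem stmt_7_general
    (c : ℕ → ℝ → ℝ)
    (hc0 : ∀ E : ℝ, c 0 E = 0)
    (hc1 : ∀ E : ℝ, c 1 E = 1)
    (hrec : ∀ (k : ℕ) (E : ℝ), c (k + 2) E = E * c (k + 1) E - c k E)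
    (K : ℝ) (hK : K ≠ 0) (L : ℕ)
    (D : ℝ → ℝ)
    (hD : ∀ E : ℝ, D E = (c (L + 1) E) ^ 2 *
      (18 * K * (K + 1) * E * c L E * c (L + 1) E
        + (K + 1) ^ 2 * E ^ 2 * (c (L + 1) E) ^ 2
        - 4 * K * E ^ 3 * c L E * c (L + 1) E
        - 27 * K ^ 2 * (c L E) ^ 2
        - 4 * (K + 1) ^ 3 * (c (L + 1) E) ^ 2))
    (E : ℝ) :
    (∃ x : ℂ, (K : ℂ) * (c L E : ℂ) * x ^ 3 + ((K : ℂ) + 1) * (c (L + 1) E : ℂ) * x ^ 2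
        + (E : ℂ) * (c (L + 1) E : ℂ) * x + (c (L + 1) E : ℂ) = 0 ∧ 0 < x.im)
      ↔ D E < 0 := by
  let P : Cubic ℝ := ⟨K * c L E, (K + 1) * c (L + 1) E, E * c (L + 1) E, c (L + 1) E⟩
  have hP : P ≠ 0 := fun h ↦ by
    have hcL : c L E = 0 := (mul_eq_zero.mp (congrArg Cubic.a h)).resolve_left hK
    have hcL' : c (L + 1) E = 0 := congrArg Cubic.d h
    exact ne_zero_of_recurrence_of_succ_eq_zero (u := (c · E)) (hc0 E) (hc1 E) (hrec · E) hcL' hcL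
  have hdiscr : D E = P.discr := by
    simp only [hD, P, Cubic.discr]
    ring
  rw [hdiscr, ← exists_aeval_toPoly_eq_zero_im_pos_iff_discr_neg hP]
  simp [P, Cubic.toPoly]

/-- The cubic `K c_L(E) x³ + (K+1) c_{L+1}(E) x² + E c_{L+1}(E) x + c_{L+1}(E) = 0`
has a solution `x ∈ ℂ` with positive imaginary part iff the discriminant-type
quantity `D_{K,L}(E)` is negative. -/
theorem stmt_7
    (c : ℕ → ℝ → ℝ)
    (hc0 : ∀ E : ℝ, c 0 E = 0)
    (hc1 : ∀ E : ℝ, c 1 E = 1)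
    (hrec : ∀ (k : ℕ) (E : ℝ), c (k + 2) E = E * c (k + 1) E - c k E)
    (K L : ℕ) (hK : 1 ≤ K) (hL : 1 ≤ L)
    (D : ℝ → ℝ)
    (hD : ∀ E : ℝ, D E = (c (L + 1) E) ^ 2 *
      (18 * (K : ℝ) * ((K : ℝ) + 1) * E * c L E * c (L + 1) E
        + ((K : ℝ) + 1) ^ 2 * E ^ 2 * (c (L + 1) E) ^ 2
        - 4 * (K : ℝ) * E ^ 3 * c L E * c (L + 1) E
        - 27 * (K : ℝ) ^ 2 * (c L E) ^ 2
        - 4 * ((K : ℝ) + 1) ^ 3 * (c (L + 1) E) ^ 2)) :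
    ∀ E : ℝ,
      (∃ x : ℂ, (K : ℂ) * (c L E : ℂ) * x ^ 3 + ((K : ℂ) + 1) * (c (L + 1) E : ℂ) * x ^ 2
          + (E : ℂ) * (c (L + 1) E : ℂ) * x + (c (L + 1) E : ℂ) = 0 ∧ 0 < x.im)
        ↔ D E < 0 := by
  simpa only [Complex.ofReal_natCast] using
    stmt_7_general c hc0 hc1 hrec K (Nat.cast_ne_zero.mpr (Nat.one_le_iff_ne_zero.mp hK)) L D hD
end

section
/- For every integer L ≥ 1 and every real E_0 > 0 there exists K_0 such that for every integer K > K_0, the interval [−E_0, E_0] is contained in the closure of the set { E ∈ ℝ : D_{K,L}(E) < 0 }, where D_{K,L}(E) = c_{L+1}(E)²·( 18K(K+1)E·c_L(E)·c_{L+1}(E) + (K+1)²E²·c_{L+1}(E)² − 4K·E³·c_L(E)·c_{L+1}(E) − 27K²·c_L(E)² − 4(K+1)³·c_{L+1}(E)² ). -/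
/-!
`D_{K,L}(E)` is the discriminant of the cubic `K c_L(E) X³ + (K+1) c_{L+1}(E) X² + E c_{L+1}(E) X +
c_{L+1}(E)`. A real cubic `a X³ + b X² + c X + d` with `c² < 3 b d` has negative discriminant: the
reversed polynomial `d X³ + c X² + b X + a` is then strictly monotone, so it has only one real root.
The identity `27 d² disc = 4 (c² - 3 b d)³ - (2 c³ - 9 b c d + 27 a d²)²` makes this algebraic. Here
the condition reads `E² < 3 (K+1)` as soon as `c_{L+1}(E) ≠ 0`, and `c_{L+1}` is the rescaled
Chebyshev polynomial `S_L`, which has only finitely many zeros.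
-/

open Polynomial Polynomial.Chebyshev Set Topology

section Discriminant

variable {R : Type*} [CommRing R]

theorem cubic_discr_mul_eq_sub_sq (P : Cubic R) :
    27 * P.d ^ 2 * P.discr = 4 * (P.c ^ 2 - 3 * P.b * P.d) ^ 3 -
      (2 * P.c ^ 3 - 9 * P.b * P.c * P.d + 27 * P.a * P.d ^ 2) ^ 2 := by
  simp only [Cubic.discr]
  ring

theorem cubic_discr_neg_of_sq_lt [LinearOrder R] [IsStrictOrderedRing R] {P : Cubic R}
    (h : P.c ^ 2 < 3 * P.b * P.d) : P.discr < 0 := by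
  have hcube : (P.c ^ 2 - 3 * P.b * P.d) ^ 3 < 0 := Odd.pow_neg (by decide) (sub_neg.mpr h)
  have hprod : 27 * P.d ^ 2 * P.discr < 0 := by
    rw [cubic_discr_mul_eq_sub_sq]
    linarith [sq_nonneg (2 * P.c ^ 3 - 9 * P.b * P.c * P.d + 27 * P.a * P.d ^ 2)]
  exact neg_of_mul_neg_right hprod (by positivity)

/-- The cubic whose discriminant at `a = c_L(E)`, `b = c_{L+1}(E)` is `D_{K,L}(E)`. -/
def treeCubic (K E a b : R) : Cubic R := ⟨K * a, (K + 1) * b, E * b, b⟩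

theorem treeCubic_discr (K E a b : R) :
    (treeCubic K E a b).discr = b ^ 2 * (18 * K * (K + 1) * E * a * b + (K + 1) ^ 2 * E ^ 2 * b ^ 2
      - 4 * K * E ^ 3 * a * b - 27 * K ^ 2 * a ^ 2 - 4 * (K + 1) ^ 3 * b ^ 2) := by
  simp only [treeCubic, Cubic.discr]
  ring

theorem treeCubic_discr_neg [LinearOrder R] [IsStrictOrderedRing R] {K E b : R} (a : R)
    (hE : E ^ 2 < 3 * (K + 1)) (hb : b ≠ 0) : (treeCubic K E a b).discr < 0 := by
  apply cubic_discr_neg_of_sq_lt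
  calc (E * b) ^ 2 = E ^ 2 * b ^ 2 := mul_pow E b 2
    _ < 3 * (K + 1) * b ^ 2 := by gcongr
    _ = 3 * ((K + 1) * b) * b := by ring

end Discriminant

theorem succ_eq_eval_chebyshev_S {R : Type*} [CommRing R] {u : ℕ → R} {x : R} (h0 : u 0 = 0)
    (h1 : u 1 = 1) (hrec : ∀ k, u (k + 2) = x * u (k + 1) - u k) (k : ℕ) :
    u (k + 1) = (S R k).eval x := by
  induction k using Nat.twoStepInduction with
  | zero => simp [h1]
  | one => simp [hrec, h0, h1]
  | more k ih ih' =>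
    rw [hrec, ih, ih']
    simp

theorem chebyshev_S_natCast_ne_zero (R : Type*) [CommRing R] [CharZero R] (n : ℕ) :
    S R n ≠ 0 := by
  intro h
  have h2 := S_eval_two (R := R) n
  rw [h, eval_zero, Int.cast_natCast] at h2
  exact Nat.cast_add_one_ne_zero n h2.symm

theorem dense_setOf_eval_ne_zero {R : Type*} [CommRing R] [IsDomain R] [TopologicalSpace R]
    [T1Space R] [∀ x : R, (𝓝[≠] x).NeBot] {p : R[X]} (hp : p ≠ 0) : Dense {x | p.eval x ≠ 0} := by
  simpa [sdiff_eq, compl_ofPred] using dense_univ.sdiff_finite (finite_setOfPred_isRoot hp)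

theorem stmt_9_general {𝕜 : Type*} [Field 𝕜] [LinearOrder 𝕜] [IsStrictOrderedRing 𝕜]
    [TopologicalSpace 𝕜] [OrderTopology 𝕜] {c : ℕ → 𝕜 → 𝕜} (hc0 : ∀ E, c 0 E = 0)
    (hc1 : ∀ E, c 1 E = 1) (hrec : ∀ k E, c (k + 2) E = E * c (k + 1) E - c k E)
    (K : 𝕜) (L : ℕ) :
    {E | E ^ 2 < 3 * (K + 1)} ⊆
      closure {E | (treeCubic K E (c L E) (c (L + 1) E)).discr < 0} := by
  have hdense : Dense {E | c (L + 1) E ≠ 0} := by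
    have hS (E : 𝕜) : c (L + 1) E = (S 𝕜 L).eval E :=
      succ_eq_eval_chebyshev_S (u := (c · E)) (hc0 E) (hc1 E) (hrec · E) L
    simpa only [hS] using dense_setOf_eval_ne_zero (chebyshev_S_natCast_ne_zero 𝕜 L)
  have hopen : IsOpen {E : 𝕜 | E ^ 2 < 3 * (K + 1)} :=
    isOpen_lt (continuous_pow 2) continuous_const
  refine (hdense.open_subset_closure_inter hopen).trans (closure_mono ?_)
  rintro E ⟨hE, hb⟩
  exact treeCubic_discr_neg (c L E) hE hb

/-- For every `L ≥ 1` and `E₀ > 0` there is `K₀` such that for all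
integers `K > K₀`, `[−E₀, E₀]` is contained in the closure of `{E : D_{K,L}(E) < 0}`. -/
theorem stmt_9
    (c : ℕ → ℝ → ℝ)
    (hc0 : ∀ E : ℝ, c 0 E = 0)
    (hc1 : ∀ E : ℝ, c 1 E = 1)
    (hrec : ∀ (k : ℕ) (E : ℝ), c (k + 2) E = E * c (k + 1) E - c k E)
    (D : ℕ → ℕ → ℝ → ℝ)
    (hD : ∀ (K L : ℕ) (E : ℝ), D K L E = (c (L + 1) E) ^ 2 *
      (18 * (K : ℝ) * ((K : ℝ) + 1) * E * c L E * c (L + 1) E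
        + ((K : ℝ) + 1) ^ 2 * E ^ 2 * (c (L + 1) E) ^ 2
        - 4 * (K : ℝ) * E ^ 3 * c L E * c (L + 1) E
        - 27 * (K : ℝ) ^ 2 * (c L E) ^ 2
        - 4 * ((K : ℝ) + 1) ^ 3 * (c (L + 1) E) ^ 2)) :
    ∀ L : ℕ, 1 ≤ L → ∀ E₀ : ℝ, 0 < E₀ →
      ∃ K₀ : ℕ, ∀ K : ℕ, K₀ < K →
        Set.Icc (-E₀) E₀ ⊆ closure {E : ℝ | D K L E < 0} := by
  intro L _ E₀ _
  refine ⟨⌈E₀ ^ 2⌉₊, fun K hK E hE => ?_⟩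
  have hsq : E ^ 2 < 3 * ((K : ℝ) + 1) := by
    have hE₀ : E ^ 2 ≤ E₀ ^ 2 := sq_le_sq' hE.1 hE.2
    have hK' : E₀ ^ 2 < K := Nat.lt_of_ceil_lt hK
    linarith [sq_nonneg E₀]
  simpa only [hD, treeCubic_discr] using stmt_9_general hc0 hc1 hrec (K : ℝ) L hsq
end

section
/- Let K ≥ 1 and L ≥ 1 be integers and let S^{K,L} be the (L+1)×(L+1) matrix with rows and columns indexed by 0,…,L whose entries are S_{0,0} = K, S_{p,p+1} = 1 for 0 ≤ p ≤ L−1, S_{L,0} = 1, and all other entries 0. Then for all x_0, x_1, …, x_L ∈ ℂ, det( 𝟙_{L+1} − diag(x_0, …, x_L)·S^{K,L} ) = 1 − K·x_0 − x_0·x_1⋯x_L. -/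
/-!
Put `D = diag(x₀, …, x_L)` and let `N` be the nilpotent shift, so that `S = N + a e₀ᵀ` with
`a = K e₀ + e_L`. The row vector `v` of the partial products `v_p = x₀ ⋯ x_{p-1}` satisfies
`v (1 - D N) = e₀ᵀ`, whence `1 - D S = (1 - (D a) v) (1 - D N)`. The second factor is
unitriangular and the first is a rank-one perturbation of the identity, with determinant
`1 - v (D a) = 1 - ∑ p, a_p x₀ ⋯ x_p`.
-/

open Finset Matrix

section Determinant

variable {m R : Type*} [Fintype m] [DecidableEq m] [CommRing R]

theorem det_sub_vecMulVec_vecMul (A : Matrix m m R) (u v : m → R) :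
    (A - vecMulVec u (v ᵥ* A)).det = (1 - v ⬝ᵥ u) * A.det := by
  have factorization : A - vecMulVec u (v ᵥ* A) =
      (1 + replicateCol Unit (-u) * replicateRow Unit v) * A := by
    rw [← vecMulVec_eq, add_mul, one_mul, vecMulVec_mul, neg_vecMulVec, sub_eq_add_neg]
  rw [factorization, det_mul, det_one_add_replicateCol_mul_replicateRow, dotProduct_neg,
    sub_eq_add_neg]

theorem det_one_sub_of_strictlyUpperTriangular [LinearOrder m] {A : Matrix m m R}
    (hA : ∀ i j, j ≤ i → A i j = 0) : (1 - A).det = 1 := by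
  have triangular : (1 - A).IsUpperTriangular :=
    blockTriangular_one.sub fun i j hji => hA i j hji.le
  rw [det_of_isUpperTriangular triangular]
  simp [hA]

end Determinant

/-- The nilpotent shift matrix of size `n`: ones on the superdiagonal, zeros elsewhere. It is the
part of the substitution matrix that advances each index by one. -/
def upperShift (R : Type*) [Zero R] [One R] (n : ℕ) : Matrix (Fin n) (Fin n) R :=
  of fun p q => if (q : ℕ) = p + 1 then 1 else 0

section Shift

variable {n : ℕ}

section Semiring

variable {R : Type*} [NonAssocSemiring R]

theorem vecMul_upperShift_zero (w : Fin (n + 1) → R) : (w ᵥ* upperShift R (n + 1)) 0 = 0 := by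
  simp [vecMul, dotProduct, upperShift]

theorem vecMul_upperShift_succ (w : Fin (n + 1) → R) (i : Fin n) :
    (w ᵥ* upperShift R (n + 1)) i.succ = w i.castSucc := by
  have val_eq_iff (p : Fin (n + 1)) : (i : ℕ) = p ↔ i.castSucc = p := by simp [Fin.ext_iff]
  simp [vecMul, dotProduct, upperShift, val_eq_iff]

end Semiring

variable {R : Type*} [CommRing R]

theorem det_one_sub_diagonal_mul_upperShift (x : Fin n → R) :
    (1 - diagonal x * upperShift R n).det = 1 := by
  refine det_one_sub_of_strictlyUpperTriangular fun p q hqp => ?_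
  have not_succ : (q : ℕ) ≠ p + 1 := by omega
  simp [upperShift, not_succ]

theorem prod_Iio_vecMul_one_sub_diagonal_mul_upperShift (x : Fin (n + 1) → R) :
    (fun p => ∏ j ∈ Iio p, x j) ᵥ* (1 - diagonal x * upperShift R (n + 1)) = Pi.single 0 1 := by
  rw [vecMul_sub, vecMul_one, ← vecMul_vecMul]
  ext q
  rw [Pi.sub_apply]
  cases q using Fin.cases with
  | zero =>
    have Iio_zero : Iio (0 : Fin (n + 1)) = ∅ := Iio_bot
    simp [vecMul_upperShift_zero, Iio_zero]
  | succ i =>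
    have Iio_succ : Iio i.succ = Iic i.castSucc := by
      ext j
      simp [Fin.lt_def, Fin.le_def]
    simp [vecMul_upperShift_succ, vecMul_diagonal, prod_Iio_mul_eq_prod_Iic, Iio_succ]

theorem det_one_sub_diagonal_mul_upperShift_add_vecMulVec (x a : Fin (n + 1) → R) :
    (1 - diagonal x * (upperShift R (n + 1) + vecMulVec a (Pi.single 0 1))).det =
      1 - ∑ p, a p * ∏ j ∈ Iic p, x j := by
  rw [mul_add, mul_vecMulVec, ← sub_sub, ← prod_Iio_vecMul_one_sub_diagonal_mul_upperShift x,
    det_sub_vecMulVec_vecMul, det_one_sub_diagonal_mul_upperShift, mul_one]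
  congr 1
  refine sum_congr rfl fun p _ => ?_
  rw [mulVec_diagonal, ← prod_Iio_mul_eq_prod_Iic]
  ring

end Shift

theorem stmt_11_general {R : Type*} [CommRing R] (K : R) (L : ℕ)
    (S : Matrix (Fin (L + 1)) (Fin (L + 1)) R)
    (hS : ∀ p q : Fin (L + 1), S p q =
      (if (p : ℕ) = 0 ∧ (q : ℕ) = 0 then K else 0)
      + (if (q : ℕ) = (p : ℕ) + 1 then 1 else 0)
      + (if (p : ℕ) = L ∧ (q : ℕ) = 0 then 1 else 0))
    (x : Fin (L + 1) → R) :
    (1 - diagonal x * S).det = 1 - K * x 0 - ∏ p, x p := by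
  have S_eq : S = upperShift R (L + 1) +
      vecMulVec (Pi.single 0 K + Pi.single (Fin.last L) 1) (Pi.single 0 1) := by
    ext p q
    simp only [hS, upperShift, Matrix.add_apply, of_apply, vecMulVec_apply, Pi.add_apply,
      Pi.single_apply, Fin.ext_iff, Fin.val_zero, Fin.val_last, ite_and]
    split_ifs <;> ring
  have Iic_zero : Iic (0 : Fin (L + 1)) = {0} := Iic_bot
  have Iic_last : Iic (Fin.last L) = univ := Iic_top
  rw [S_eq, det_one_sub_diagonal_mul_upperShift_add_vecMulVec]
  simp [add_mul, sum_add_distrib, Pi.single_apply, Iic_zero, Iic_last, sub_sub]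

/-- For the substitution matrix `S^{K,L}` one has
`det(𝟙 − diag(x₀,…,x_L)·S^{K,L}) = 1 − K·x₀ − x₀x₁⋯x_L`. -/
theorem stmt_11
    (K L : ℕ) (hK : 1 ≤ K) (hL : 1 ≤ L)
    (S : Matrix (Fin (L + 1)) (Fin (L + 1)) ℂ)
    (hS : ∀ p q : Fin (L + 1), S p q =
      (if (p : ℕ) = 0 ∧ (q : ℕ) = 0 then (K : ℂ) else 0)
      + (if (q : ℕ) = (p : ℕ) + 1 then 1 else 0)
      + (if (p : ℕ) = L ∧ (q : ℕ) = 0 then 1 else 0)) :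
    ∀ x : Fin (L + 1) → ℂ,
      (1 - Matrix.diagonal x * S).det = 1 - (K : ℂ) * x 0 - ∏ p, x p :=
  stmt_11_general (K : ℂ) L S hS
end

section
/- Let k ≥ 1 and let D be a complex symmetric k×k matrix whose real part (the real symmetric matrix Re D) is positive definite. Then for every v ∈ ℂ^k the integral I(v) = ∫_{ℝ^k} exp( −(1/2)·Σ_{i,j} (x+v)_i·D_{ij}·(x+v)_j ) dx converges absolutely, is independent of v, and satisfies I(v)²·det(D) = (2π)^k. -/
open MeasureTheory

/-!
The positive definite form `Re D` and the symmetric form `Im D` are simultaneously diagonalizable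
by a real congruence `P`, so `Pᵀ D P` is diagonal with entries `1 + i βⱼ`. The substitution
`x = P y`, `v = P w` turns `I(v)` into `|det P|` times a product of one-dimensional Gaussian
integrals `∫ exp (-(bⱼ / 2) (y + wⱼ)²) dy = (2π / bⱼ)^(1/2)`, none of which depends on the complex
shift `wⱼ`. Squaring removes the branch of the root, and `(det P)² det D = ∏ bⱼ`.
-/

open Matrix

section Congruence

open scoped MatrixOrder ComplexOrder

variable {ι : Type*} [Fintype ι] [DecidableEq ι]

lemma det_sq_mul_det_eq_prod_of_congruence {R : Type*} [CommRing R] {Q D : Matrix ι ι R}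
    {b : ι → R} (hQD : Qᵀ * D * Q = diagonal b) : Q.det ^ 2 * D.det = ∏ i, b i := by
  rw [← det_diagonal, ← hQD, det_mul, det_mul, det_transpose]
  ring

lemma exists_isUnit_conjTranspose_mul_mul_eq_one {𝕜 : Type*} [RCLike 𝕜]
    {A : Matrix ι ι 𝕜} (hA : A.PosDef) :
    ∃ T : Matrix ι ι 𝕜, IsUnit T ∧ Tᴴ * A * T = 1 := by
  obtain ⟨S, hS, rfl⟩ :=
    CStarAlgebra.isStrictlyPositive_iff_eq_star_mul_self.mp hA.isStrictlyPositive
  lift S to (Matrix ι ι 𝕜)ˣ using hS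
  refine ⟨↑S⁻¹, S⁻¹.isUnit, ?_⟩
  rw [star_eq_conjTranspose, ← Matrix.mul_assoc, ← conjTranspose_mul, Units.mul_inv,
    conjTranspose_one, Matrix.one_mul, Units.mul_inv]

lemma exists_isUnit_conjTranspose_mul_mul_eq_one_and_eq_diagonal {𝕜 : Type*} [RCLike 𝕜]
    {A B : Matrix ι ι 𝕜} (hA : A.PosDef) (hB : B.IsHermitian) :
    ∃ (P : Matrix ι ι 𝕜) (β : ι → ℝ), IsUnit P ∧ Pᴴ * A * P = 1 ∧
      Pᴴ * B * P = diagonal fun i => (β i : 𝕜) := by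
  obtain ⟨T, hT, hTA⟩ := exists_isUnit_conjTranspose_mul_mul_eq_one hA
  have hTB : (Tᴴ * B * T).IsHermitian := isHermitian_conjTranspose_mul_mul T hB
  set U := (hTB.eigenvectorUnitary : Matrix ι ι 𝕜)
  have hU : Uᴴ * U = 1 := Unitary.coe_star_mul_self hTB.eigenvectorUnitary
  have hdiag : Uᴴ * (Tᴴ * B * T) * U = diagonal fun i => (hTB.eigenvalues i : 𝕜) := by
    have hspectral := hTB.conjStarAlgAut_star_eigenvectorUnitary
    rwa [Unitary.conjStarAlgAut_apply, Unitary.coe_star, star_star] at hspectral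
  have hcongr (M : Matrix ι ι 𝕜) : (T * U)ᴴ * M * (T * U) = Uᴴ * (Tᴴ * M * T) * U := by
    simp only [conjTranspose_mul, Matrix.mul_assoc]
  refine ⟨T * U, hTB.eigenvalues, hT.mul (.of_mul_eq_one_right _ hU), ?_, ?_⟩
  · rw [hcongr, hTA, Matrix.mul_one, hU]
  · rw [hcongr, hdiag]

lemma exists_real_congruence_eq_diagonal {D : Matrix ι ι ℂ} (hD : D.IsSymm)
    (hre : (D.map Complex.re).PosDef) :
    ∃ (P : Matrix ι ι ℝ) (b : ι → ℂ), P.det ≠ 0 ∧ (∀ i, 0 < (b i).re) ∧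
      (P.map Complex.ofRealHom)ᵀ * D * P.map Complex.ofRealHom = diagonal b := by
  have him : (D.map Complex.im).IsHermitian := hD.map Complex.im
  obtain ⟨P, β, hP, hPre, hPim⟩ :=
    exists_isUnit_conjTranspose_mul_mul_eq_one_and_eq_diagonal hre him
  rw [conjTranspose_eq_transpose_of_trivial] at hPre hPim
  have hsplit : D = (D.map Complex.re).map Complex.ofRealHom +
      Complex.I • (D.map Complex.im).map Complex.ofRealHom := by
    ext i j
    simp [mul_comm Complex.I, Complex.re_add_im]
  refine ⟨P, fun i => 1 + Complex.I * β i, ((isUnit_iff_isUnit_det P).1 hP).ne_zero,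
    fun i => by simp, ?_⟩
  rw [hsplit, Matrix.mul_add, Matrix.add_mul, Matrix.mul_smul, Matrix.smul_mul, ← transpose_map,
    ← Matrix.map_mul, ← Matrix.map_mul, ← Matrix.map_mul, ← Matrix.map_mul, hPre, hPim]
  ext i j
  by_cases h : i = j <;> simp [h]

end Congruence

section LinearChangeOfVariables

variable {E F : Type*} [NormedAddCommGroup E] [NormedSpace ℝ E] [FiniteDimensional ℝ E]
  [MeasurableSpace E] [BorelSpace E] [NormedAddCommGroup F]

lemma measurableEmbedding_of_det_ne_zero {L : E →ₗ[ℝ] E} (hL : LinearMap.det L ≠ 0) :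
    MeasurableEmbedding L :=
  (LinearMap.equivOfDetNeZero L hL).toContinuousLinearEquiv.toHomeomorph.measurableEmbedding

variable (μ : Measure E) [μ.IsAddHaarMeasure]

lemma integrable_comp_linearMap_iff {L : E →ₗ[ℝ] E} (hL : LinearMap.det L ≠ 0) (f : E → F) :
    Integrable (fun x => f (L x)) μ ↔ Integrable f μ := by
  rw [← Function.comp_def, ← (measurableEmbedding_of_det_ne_zero hL).integrable_map_iff,
    Measure.map_linearMap_addHaar_eq_smul_addHaar μ hL,
    integrable_smul_measure (by simpa using hL) ENNReal.ofReal_ne_top]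

lemma integral_comp_linearMap [NormedSpace ℝ F] {L : E →ₗ[ℝ] E} (hL : LinearMap.det L ≠ 0)
    (f : E → F) : ∫ x, f (L x) ∂μ = |(LinearMap.det L)⁻¹| • ∫ x, f x ∂μ := by
  rw [← (measurableEmbedding_of_det_ne_zero hL).integral_map,
    Measure.map_linearMap_addHaar_eq_smul_addHaar μ hL, integral_smul_measure,
    ENNReal.toReal_ofReal (abs_nonneg _)]

end LinearChangeOfVariables

section OneDimensional

lemma neg_half_mul_add_sq_eq (b w x : ℂ) :
    -(b / 2) * (x + w) ^ 2 = -(b / 2) * x ^ 2 + -(b * w) * x + -(b / 2 * w ^ 2) := by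
  ring

variable {b : ℂ} (hb : 0 < b.re) (w : ℂ)

include hb

lemma integrable_cexp_neg_half_mul_add_sq :
    Integrable fun x : ℝ => Complex.exp (-(b / 2) * (x + w) ^ 2) := by
  simp_rw [neg_half_mul_add_sq_eq]
  exact integrable_cexp_quadratic (by simpa using hb) _ _

lemma integral_cexp_neg_half_mul_add_sq :
    ∫ x : ℝ, Complex.exp (-(b / 2) * (x + w) ^ 2) = (2 * Real.pi / b) ^ (1 / 2 : ℂ) := by
  have : b ≠ 0 := by rintro rfl; simp at hb
  have hconst : -(b / 2 * w ^ 2) - (-(b * w)) ^ 2 / (4 * -(b / 2)) = 0 := by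
    field
  simp_rw [neg_half_mul_add_sq_eq]
  rw [integral_cexp_quadratic (by simpa using hb), hconst, Complex.exp_zero, mul_one, neg_neg,
    div_div_eq_mul_div, mul_comm (Real.pi : ℂ)]

end OneDimensional

section ShiftedGaussian

variable {ι : Type*} [Fintype ι]

/-- The Gaussian `x ↦ exp (-(1/2) (x + v) · D (x + v))` on real vectors `x`, with complex
precision matrix `D` and complex shift `v`; the dot product is bilinear, without conjugation. -/
noncomputable def shiftedGaussian (D : Matrix ι ι ℂ) (v : ι → ℂ) (x : ι → ℝ) : ℂ :=
  Complex.exp (-(1 / 2) * ((Complex.ofRealHom ∘ x + v) ⬝ᵥ D *ᵥ (Complex.ofRealHom ∘ x + v)))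

lemma shiftedGaussian_eq_cexp_sum (D : Matrix ι ι ℂ) (v : ι → ℂ) (x : ι → ℝ) :
    shiftedGaussian D v x =
      Complex.exp (-(1 / 2) * ∑ i, ∑ j, ((x i : ℂ) + v i) * D i j * ((x j : ℂ) + v j)) := by
  simp [shiftedGaussian, dotProduct, mulVec, Finset.mul_sum, mul_assoc]

lemma shiftedGaussian_mulVec_mulVec (D : Matrix ι ι ℂ) (P : Matrix ι ι ℝ) (w : ι → ℂ)
    (y : ι → ℝ) :
    shiftedGaussian D (P.map Complex.ofRealHom *ᵥ w) (P *ᵥ y) =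
      shiftedGaussian ((P.map Complex.ofRealHom)ᵀ * D * P.map Complex.ofRealHom) w y := by
  have hcast : Complex.ofRealHom ∘ (P *ᵥ y) = P.map Complex.ofRealHom *ᵥ (Complex.ofRealHom ∘ y) :=
    funext (RingHom.map_mulVec Complex.ofRealHom P y)
  simp only [shiftedGaussian, hcast, ← mulVec_add, ← mulVec_mulVec, dotProduct_mulVec,
    vecMul_transpose]

section Diagonalizable

variable [DecidableEq ι]

lemma shiftedGaussian_diagonal (b w : ι → ℂ) (y : ι → ℝ) :
    shiftedGaussian (diagonal b) w y = ∏ i, Complex.exp (-(b i / 2) * (y i + w i) ^ 2) := by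
  simp only [shiftedGaussian, dotProduct, mulVec_diagonal, ← Complex.exp_sum, Finset.mul_sum,
    Pi.add_apply, Function.comp_apply, Complex.ofRealHom_eq_coe]
  congr! 2
  ring

lemma integrable_shiftedGaussian_diagonal {b : ι → ℂ} (hb : ∀ i, 0 < (b i).re) (w : ι → ℂ) :
    Integrable (shiftedGaussian (diagonal b) w) := by
  simp_rw [funext (shiftedGaussian_diagonal b w)]
  exact Integrable.fintype_prod fun i => integrable_cexp_neg_half_mul_add_sq (hb i) (w i)

lemma integral_shiftedGaussian_diagonal {b : ι → ℂ} (hb : ∀ i, 0 < (b i).re) (w : ι → ℂ) :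
    ∫ y, shiftedGaussian (diagonal b) w y = ∏ i, (2 * Real.pi / b i) ^ (1 / 2 : ℂ) := by
  simp_rw [shiftedGaussian_diagonal]
  rw [integral_fintype_prod_volume_eq_prod
    (fun i (x : ℝ) => Complex.exp (-(b i / 2) * (x + w i) ^ 2))]
  exact Finset.prod_congr rfl fun i _ => integral_cexp_neg_half_mul_add_sq (hb i) (w i)

variable {P : Matrix ι ι ℝ} (hP : P.det ≠ 0)
include hP

lemma exists_map_ofReal_mulVec_eq (v : ι → ℂ) : ∃ w, P.map Complex.ofRealHom *ᵥ w = v := by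
  have hunit : IsUnit (P.map Complex.ofRealHom) :=
    ((isUnit_iff_isUnit_det P).2 hP.isUnit).map Complex.ofRealHom.mapMatrix
  exact mulVec_surjective_iff_isUnit.2 hunit v

variable {D : Matrix ι ι ℂ} {b : ι → ℂ} (hb : ∀ i, 0 < (b i).re)
  (hPD : (P.map Complex.ofRealHom)ᵀ * D * P.map Complex.ofRealHom = diagonal b)
include hb hPD

lemma integrable_shiftedGaussian_of_congruence (v : ι → ℂ) : Integrable (shiftedGaussian D v) := by
  obtain ⟨w, rfl⟩ := exists_map_ofReal_mulVec_eq hP v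
  rw [← integrable_comp_linearMap_iff volume (L := toLin' P) (by rwa [LinearMap.det_toLin'])]
  simpa only [toLin'_apply, shiftedGaussian_mulVec_mulVec, hPD] using
    integrable_shiftedGaussian_diagonal hb w

lemma integral_shiftedGaussian_of_congruence (v : ι → ℂ) :
    ∫ x, shiftedGaussian D v x = |P.det| • ∏ i, (2 * Real.pi / b i) ^ (1 / 2 : ℂ) := by
  obtain ⟨w, rfl⟩ := exists_map_ofReal_mulVec_eq hP v
  have hsubst := integral_comp_linearMap volume (L := toLin' P) (by rwa [LinearMap.det_toLin'])
    (shiftedGaussian D (P.map Complex.ofRealHom *ᵥ w))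
  simp only [toLin'_apply, shiftedGaussian_mulVec_mulVec, hPD, LinearMap.det_toLin',
    integral_shiftedGaussian_diagonal hb, abs_inv] at hsubst
  rw [hsubst, smul_inv_smul₀ (abs_ne_zero.2 hP)]

end Diagonalizable

variable {D : Matrix ι ι ℂ} (hD : D.IsSymm) (hre : (D.map Complex.re).PosDef)
include hD hre

theorem integrable_shiftedGaussian (v : ι → ℂ) : Integrable (shiftedGaussian D v) := by
  classical
  obtain ⟨P, b, hP, hb, hPD⟩ := exists_real_congruence_eq_diagonal hD hre
  exact integrable_shiftedGaussian_of_congruence hP hb hPD v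

theorem integral_shiftedGaussian_eq (v w : ι → ℂ) :
    ∫ x, shiftedGaussian D v x = ∫ x, shiftedGaussian D w x := by
  classical
  obtain ⟨P, b, hP, hb, hPD⟩ := exists_real_congruence_eq_diagonal hD hre
  simp only [integral_shiftedGaussian_of_congruence hP hb hPD]

theorem integral_shiftedGaussian_sq_mul_det [DecidableEq ι] (v : ι → ℂ) :
    (∫ x, shiftedGaussian D v x) ^ 2 * D.det = (2 * Real.pi : ℂ) ^ Fintype.card ι := by
  obtain ⟨P, b, hP, hb, hPD⟩ := exists_real_congruence_eq_diagonal hD hre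
  have hb0 (i : ι) : b i ≠ 0 := fun h => by simpa [h] using hb i
  have hroot (z : ℂ) : (z ^ (1 / 2 : ℂ)) ^ 2 = z := by
    simpa only [one_div] using Complex.cpow_ofNat_inv_pow z 2
  have hdet : (P.det : ℂ) = (P.map Complex.ofRealHom).det := RingHom.map_det Complex.ofRealHom P
  calc (∫ x, shiftedGaussian D v x) ^ 2 * D.det
    _ = (∏ i, (2 * Real.pi / b i)) * ((P.det : ℂ) ^ 2 * D.det) := by
      rw [integral_shiftedGaussian_of_congruence hP hb hPD, Complex.real_smul, mul_pow,
        ← Complex.ofReal_pow, sq_abs, Complex.ofReal_pow, ← Finset.prod_pow]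
      simp only [hroot]
      ring
    _ = ∏ i, (2 * Real.pi / b i * b i) := by
      rw [hdet, det_sq_mul_det_eq_prod_of_congruence hPD, Finset.prod_mul_distrib]
    _ = (2 * Real.pi : ℂ) ^ Fintype.card ι := by
      simp only [div_mul_cancel₀ _ (hb0 _), Finset.prod_const, Finset.card_univ]

end ShiftedGaussian

/-- For a complex symmetric matrix `D` with positive definite real
part, the Gaussian integral `I(v) = ∫ exp(−(1/2)(x+v)·D(x+v)) dx` converges
absolutely, is independent of `v`, and satisfies `I(v)²·det(D) = (2π)^k`. -/
theorem stmt_15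
    (k : ℕ) (hk : 1 ≤ k)
    (D : Matrix (Fin k) (Fin k) ℂ) (hsymm : D.IsSymm)
    (hre : (Matrix.of fun i j => (D i j).re : Matrix (Fin k) (Fin k) ℝ).PosDef)
    (I : (Fin k → ℂ) → ℂ)
    (hI : ∀ v : Fin k → ℂ, I v = ∫ x : Fin k → ℝ,
      Complex.exp (-(1 / 2) * ∑ i, ∑ j, ((x i : ℂ) + v i) * D i j * ((x j : ℂ) + v j))) :
    (∀ v : Fin k → ℂ, Integrable (fun x : Fin k → ℝ =>
      Complex.exp (-(1 / 2) * ∑ i, ∑ j, ((x i : ℂ) + v i) * D i j * ((x j : ℂ) + v j)))) ∧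
    (∀ v w : Fin k → ℂ, I v = I w) ∧
    (∀ v : Fin k → ℂ, (I v) ^ 2 * D.det = ((2 * Real.pi : ℝ) : ℂ) ^ k) := by
  simp only [← shiftedGaussian_eq_cexp_sum] at hI ⊢
  refine ⟨integrable_shiftedGaussian hsymm hre, fun v w => ?_, fun v => ?_⟩
  · rw [hI, hI, integral_shiftedGaussian_eq hsymm hre]
  · rw [hI, integral_shiftedGaussian_sq_mul_det hsymm hre, Fintype.card_fin,
      Complex.ofReal_mul, Complex.ofReal_ofNat]
end

section
/- Let k ≥ 1 and let D be a real symmetric k×k matrix. For j ≥ 1 let 𝒟_j be the jk×jk block tridiagonal matrix with k×k blocks, having −D in each diagonal block and the k×k identity in each block directly above and below the diagonal (so 𝒟_1 = −D). Define recursively D_1 = −D^{−1} (when D is invertible) and D_{j+1} = −(D + D_j)^{−1} (when D + D_j is invertible). Then for every L ≥ 1 the following are equivalent: (a) D is invertible and the matrices D_1, …, D_L are all well defined (i.e., D + D_{j−1} is invertible for 2 ≤ j ≤ L); (b) the matrices 𝒟_1, …, 𝒟_L are all invertible. -/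
/-!
Split `𝒟_{j+1}` into its first block row and column and the remaining copy of `𝒟_j`. When `𝒟_j` is
invertible, `𝒟_{j+1}` is invertible if and only if the Schur complement of `𝒟_j` is, and the inverse
of that Schur complement is the leading block of `𝒟_{j+1}⁻¹`. The first block row and column see
only the leading block `X_j` of `𝒟_j⁻¹`: for diagonal blocks `A`, superdiagonal blocks `B` and
subdiagonal blocks `C` the Schur complement is `A - B X_j C`. So `X_{j+1} = (A - B X_j C)⁻¹`, and
`A - B X_j C` is invertible if and only if `𝒟_{j+1}` is. For `A = -D` and `B = C = 1` this recursion
is `X_{j+1} = -(D + X_j)⁻¹`, so that `X_j = D_j`.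
-/

open Matrix

theorem nonsing_inv_neg {n R : Type*} [Fintype n] [DecidableEq n] [CommRing R]
    (M : Matrix n n R) : (-M)⁻¹ = -M⁻¹ := by
  have hone : (-1 : Matrix n n R)⁻¹ = -1 := inv_eq_right_inv (by simp)
  rw [← mul_neg_one, Matrix.mul_inv_rev, hone, neg_one_mul]

section FromBlocks

variable {l m R : Type*} [Fintype l] [DecidableEq l] [Fintype m] [DecidableEq m] [CommRing R]
  {A : Matrix l l R} {B : Matrix l m R} {C : Matrix m l R} {D : Matrix m m R}

theorem isUnit_fromBlocks_iff_of_isUnit₂₂ (hD : IsUnit D) :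
    IsUnit (fromBlocks A B C D) ↔ IsUnit (A - B * D⁻¹ * C) := by
  cases hD.nonempty_invertible
  rw [isUnit_fromBlocks_iff_of_invertible₂₂, invOf_eq_nonsing_inv]

theorem toBlocks₁₁_inv_fromBlocks (hD : IsUnit D) (hS : IsUnit (A - B * D⁻¹ * C)) :
    (fromBlocks A B C D)⁻¹.toBlocks₁₁ = (A - B * D⁻¹ * C)⁻¹ := by
  cases ((isUnit_fromBlocks_iff_of_isUnit₂₂ hD).mpr hS).nonempty_invertible
  cases hD.nonempty_invertible
  rw [← invOf_eq_nonsing_inv D] at hS ⊢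
  cases hS.nonempty_invertible
  rw [← invOf_eq_nonsing_inv, ← invOf_eq_nonsing_inv, invOf_fromBlocks₂₂_eq, toBlocks_fromBlocks₁₁]

end FromBlocks

section BlockTridiagonal

variable {n R : Type*}

/-- The block tridiagonal matrix with `j` block rows, all of whose diagonal blocks are `A`, blocks
directly above the diagonal `B` and blocks directly below the diagonal `C`. The first component of
an index is the position of the block, the second one the position inside the block. -/
def blockTridiagonal [Zero R] (A B C : Matrix n n R) (j : ℕ) : Matrix (Fin j × n) (Fin j × n) R :=
  of fun p q =>
    if p.1 = q.1 then A p.2 q.2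
    else if (p.1 : ℕ) + 1 = q.1 then B p.2 q.2
    else if (q.1 : ℕ) + 1 = p.1 then C p.2 q.2
    else 0

/-- The upper-left block of a block matrix with at least one block row, indexed as in
`blockTridiagonal`. -/
def leadingBlock {j : ℕ} (M : Matrix (Fin (j + 1) × n) (Fin (j + 1) × n) R) : Matrix n n R :=
  M.submatrix (Prod.mk 0) (Prod.mk 0)

/-- The block row matrix `[1, 0, …, 0]` with `j + 1` blocks: multiplying by it on the left extracts
the first block row, multiplying by its transpose on the right the first block column. -/
def leadingRow (n R : Type*) [DecidableEq n] [Zero R] [One R] (j : ℕ) :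
    Matrix n (Fin (j + 1) × n) R :=
  (1 : Matrix (Fin (j + 1) × n) (Fin (j + 1) × n) R).submatrix (Prod.mk 0) id

/-- The equivalence splitting off the first of `j + 1` blocks of indices. -/
def sumProdEquivFinSuccProd (n : Type*) (j : ℕ) : n ⊕ Fin j × n ≃ Fin (j + 1) × n where
  toFun := Sum.elim (Prod.mk 0) (Prod.map Fin.succ id)
  invFun p := Fin.cases (Sum.inl p.2) (fun i => Sum.inr (i, p.2)) p.1
  left_inv := by rintro (a | ⟨i, a⟩) <;> rfl
  right_inv := by
    rintro ⟨i, a⟩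
    cases i using Fin.cases <;> rfl

theorem toBlocks₁₁_submatrix_sumProdEquivFinSuccProd {j : ℕ}
    (M : Matrix (Fin (j + 1) × n) (Fin (j + 1) × n) R) :
    (M.submatrix (sumProdEquivFinSuccProd n j) (sumProdEquivFinSuccProd n j)).toBlocks₁₁ =
      leadingBlock M :=
  rfl

theorem blockTridiagonal_one [Zero R] (A B C : Matrix n n R) :
    blockTridiagonal A B C 1 =
      A.submatrix (Equiv.uniqueProd n (Fin 1)) (Equiv.uniqueProd n (Fin 1)) := by
  ext ⟨i, a⟩ ⟨j, b⟩
  simp [blockTridiagonal, Subsingleton.elim i j]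

section Semiring

variable [Fintype n] [DecidableEq n] [Semiring R] (A B C : Matrix n n R)

theorem leadingRow_mul_mul_transpose_leadingRow {j : ℕ}
    (M : Matrix (Fin (j + 1) × n) (Fin (j + 1) × n) R) :
    leadingRow n R j * M * (leadingRow n R j)ᵀ = leadingBlock M := by
  have hrow : leadingRow n R j * M = M.submatrix (Prod.mk 0) id :=
    one_submatrix_mul _ (.refl _) M
  have hcol (N : Matrix n (Fin (j + 1) × n) R) :
      N * (leadingRow n R j)ᵀ = N.submatrix id (Prod.mk 0) := by
    rw [leadingRow, transpose_submatrix, transpose_one]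
    exact mul_submatrix_one (.refl _) _ N
  rw [hrow, hcol]
  rfl

theorem blockTridiagonal_add_two_submatrix (j : ℕ) :
    (blockTridiagonal A B C (j + 2)).submatrix
        (sumProdEquivFinSuccProd n (j + 1)) (sumProdEquivFinSuccProd n (j + 1)) =
      fromBlocks A (B * leadingRow n R j) ((leadingRow n R j)ᵀ * C)
        (blockTridiagonal A B C (j + 1)) := by
  ext (a | ⟨p, a⟩) (b | ⟨q, b⟩)
  · simp [blockTridiagonal, sumProdEquivFinSuccProd]
  · cases q using Fin.cases <;>
      simp [blockTridiagonal, sumProdEquivFinSuccProd, leadingRow, mul_apply, one_apply,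
        Prod.ext_iff, Fin.ext_iff]
  · cases p using Fin.cases <;>
      simp [blockTridiagonal, sumProdEquivFinSuccProd, leadingRow, mul_apply, one_apply,
        Prod.ext_iff, Fin.ext_iff]
  · simp [blockTridiagonal, sumProdEquivFinSuccProd]

theorem mul_leadingRow_mul_mul_transpose_leadingRow_mul {j : ℕ}
    (M : Matrix (Fin (j + 1) × n) (Fin (j + 1) × n) R) :
    B * leadingRow n R j * M * ((leadingRow n R j)ᵀ * C) = B * leadingBlock M * C := by
  rw [← leadingRow_mul_mul_transpose_leadingRow]
  simp only [Matrix.mul_assoc]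

end Semiring

section CommRing

variable [Fintype n] [DecidableEq n] [CommRing R] (A B C : Matrix n n R)

theorem isUnit_blockTridiagonal_one_iff : IsUnit (blockTridiagonal A B C 1) ↔ IsUnit A := by
  rw [blockTridiagonal_one, isUnit_submatrix_equiv]

theorem leadingBlock_inv_blockTridiagonal_one :
    leadingBlock (blockTridiagonal A B C 1)⁻¹ = A⁻¹ := by
  rw [blockTridiagonal_one, inv_submatrix_equiv]
  rfl

variable {A B C} {j : ℕ}

theorem isUnit_blockTridiagonal_add_two_iff (hj : IsUnit (blockTridiagonal A B C (j + 1))) :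
    IsUnit (blockTridiagonal A B C (j + 2)) ↔
      IsUnit (A - B * leadingBlock (blockTridiagonal A B C (j + 1))⁻¹ * C) := by
  rw [← isUnit_submatrix_equiv (sumProdEquivFinSuccProd n (j + 1))
      (sumProdEquivFinSuccProd n (j + 1)), blockTridiagonal_add_two_submatrix,
    isUnit_fromBlocks_iff_of_isUnit₂₂ hj, mul_leadingRow_mul_mul_transpose_leadingRow_mul]

theorem leadingBlock_inv_blockTridiagonal_add_two (hj : IsUnit (blockTridiagonal A B C (j + 1)))
    (hj' : IsUnit (blockTridiagonal A B C (j + 2))) :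
    leadingBlock (blockTridiagonal A B C (j + 2))⁻¹ =
      (A - B * leadingBlock (blockTridiagonal A B C (j + 1))⁻¹ * C)⁻¹ := by
  have hS := (isUnit_blockTridiagonal_add_two_iff hj).mp hj'
  rw [← mul_leadingRow_mul_mul_transpose_leadingRow_mul] at hS ⊢
  rw [← toBlocks₁₁_submatrix_sumProdEquivFinSuccProd, ← inv_submatrix_equiv,
    blockTridiagonal_add_two_submatrix, toBlocks₁₁_inv_fromBlocks hj hS]

variable {X : ℕ → Matrix n n R}

theorem eq_leadingBlock_inv_blockTridiagonal (hX1 : X 1 = A⁻¹)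
    (hXrec : ∀ j, 1 ≤ j → X (j + 1) = (A - B * X j * C)⁻¹)
    (hunit : ∀ i, 1 ≤ i → i ≤ j + 1 → IsUnit (blockTridiagonal A B C i)) :
    X (j + 1) = leadingBlock (blockTridiagonal A B C (j + 1))⁻¹ := by
  induction j with
  | zero => rw [leadingBlock_inv_blockTridiagonal_one, hX1]
  | succ j ih =>
    rw [hXrec (j + 1) (by lia), ih fun i hi hij => hunit i hi (by lia),
      leadingBlock_inv_blockTridiagonal_add_two (hunit (j + 1) (by lia) (by lia))
        (hunit (j + 2) (by lia) le_rfl)]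

theorem stmt_17_general (hX1 : X 1 = A⁻¹)
    (hXrec : ∀ j, 1 ≤ j → X (j + 1) = (A - B * X j * C)⁻¹) (L : ℕ) (hL : 1 ≤ L) :
    (IsUnit A ∧ ∀ j, 1 ≤ j → j < L → IsUnit (A - B * X j * C)) ↔
      ∀ j, 1 ≤ j → j ≤ L → IsUnit (blockTridiagonal A B C j) := by
  obtain ⟨L, rfl⟩ := Nat.exists_eq_add_of_le' hL
  clear hL
  induction L with
  | zero =>
    have hrec : ∀ j, 1 ≤ j → j < 1 → IsUnit (A - B * X j * C) := fun j _ _ => by lia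
    have hle : ∀ P : ℕ → Prop, (∀ j, 1 ≤ j → j ≤ 1 → P j) ↔ P 1 := by grind
    rw [zero_add, and_iff_left hrec, hle, isUnit_blockTridiagonal_one_iff]
  | succ L ih =>
    have hlt : ∀ P : ℕ → Prop,
        (∀ j, 1 ≤ j → j < L + 2 → P j) ↔ (∀ j, 1 ≤ j → j < L + 1 → P j) ∧ P (L + 1) := by grind
    have hle : ∀ P : ℕ → Prop,
        (∀ j, 1 ≤ j → j ≤ L + 2 → P j) ↔ (∀ j, 1 ≤ j → j ≤ L + 1 → P j) ∧ P (L + 2) := by grind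
    rw [hlt, hle, ← and_assoc, ih]
    refine and_congr_right fun hunit => ?_
    rw [eq_leadingBlock_inv_blockTridiagonal hX1 hXrec hunit,
      isUnit_blockTridiagonal_add_two_iff (hunit (L + 1) (by lia) le_rfl)]

end CommRing

end BlockTridiagonal

/-- For a real symmetric `k×k` matrix `D`, the recursively defined
matrices `D_1 = −D⁻¹`, `D_{j+1} = −(D + D_j)⁻¹` are all well defined up to index
`L` (i.e. `D` is invertible and each `D + D_j`, `1 ≤ j < L`, is invertible) if
and only if the block tridiagonal matrices `𝒟_1, …, 𝒟_L` (with `−D` on the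
diagonal blocks and `𝟙` on the adjacent off-diagonal blocks) are all invertible. -/
theorem stmt_17
    (k : ℕ) (hk : 1 ≤ k)
    (D : Matrix (Fin k) (Fin k) ℝ) (hsymm : D.IsSymm)
    (𝓓 : (j : ℕ) → Matrix (Fin j × Fin k) (Fin j × Fin k) ℝ)
    (h𝓓 : ∀ (j : ℕ) (a b : Fin j × Fin k), 𝓓 j a b =
      if a.1 = b.1 then -D a.2 b.2
      else if (a.1 : ℕ) + 1 = (b.1 : ℕ) ∨ (b.1 : ℕ) + 1 = (a.1 : ℕ) then
        (if a.2 = b.2 then 1 else 0)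
      else 0)
    (Dseq : ℕ → Matrix (Fin k) (Fin k) ℝ)
    (hD1 : Dseq 1 = -D⁻¹)
    (hDrec : ∀ j : ℕ, 1 ≤ j → Dseq (j + 1) = -(D + Dseq j)⁻¹) :
    ∀ L : ℕ, 1 ≤ L →
      ((IsUnit D.det ∧ ∀ j : ℕ, 1 ≤ j → j < L → IsUnit (D + Dseq j).det) ↔
        (∀ j : ℕ, 1 ≤ j → j ≤ L → IsUnit (𝓓 j).det)) := by
  have h𝓓_eq : 𝓓 = blockTridiagonal (-D) 1 1 := by
    ext j p q
    simp only [h𝓓, blockTridiagonal, of_apply, one_apply, ite_or]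
    rfl
  have hneg : ∀ j, -D - 1 * Dseq j * 1 = -(D + Dseq j) := fun j => by
    rw [Matrix.one_mul, Matrix.mul_one, neg_add']
  have hD1' : Dseq 1 = (-D)⁻¹ := by rw [hD1, nonsing_inv_neg]
  have hDrec' : ∀ j, 1 ≤ j → Dseq (j + 1) = (-D - 1 * Dseq j * 1)⁻¹ := fun j hj => by
    rw [hDrec j hj, hneg, nonsing_inv_neg]
  intro L hL
  simpa only [h𝓓_eq, ← isUnit_iff_isUnit_det, hneg, IsUnit.neg_iff] using
    stmt_17_general hD1' hDrec' L hL
end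

section
/- Let k ≥ 1 and let h_1, h_2 : ℝ^k → ℂ be continuous functions with exponential decay, i.e., there exist C > 0 and c > 0 such that |h_i(x)| ≤ C·e^{−c‖x‖} for i = 1, 2 and all x ∈ ℝ^k. Then for every p ∈ [1, ∞], the linear map sending f ∈ L²(ℝ^k) to the function x ↦ h_1(x)·( 𝓕(h_2·f) )(x) is well defined and compact as an operator from L²(ℝ^k) to L^p(ℝ^k). -/
open MeasureTheory

/-!
The operator sends `f` to `x ↦ h₁ x • K x f`, where `K x f = 𝓕 (h₂ f) x` is the pairing of `f` with
the modulation of `h₂` at frequency `x`. Since `h₂` lies in `L²`, dominated convergence makes `K` a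
bounded continuous map into the dual of `L²`. Up to a small error in `L^p`, `h₁` may be replaced by
a function with compact support, and on that support `K` is a uniform limit of simple functions;
for simple `K` the operator has finite rank, and compact operators are closed in operator norm.
-/

open Filter Set
open scoped ENNReal NNReal Topology

section DominatedConvergence

variable {α ι X E : Type*} [MeasurableSpace α] {μ : Measure α} [NormedAddCommGroup E]
  {p : ℝ≥0∞} {g : α → ℝ}

theorem tendsto_eLpNorm_sub_zero_of_dominated {l : Filter ι} [l.IsCountablyGenerated]
    {f : ι → α → E} {f₀ : α → E} (hp₀ : p ≠ 0) (hp : p ≠ ∞)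
    (hf : ∀ i, AEStronglyMeasurable (f i) μ) (hf₀ : AEStronglyMeasurable f₀ μ) (hg : MemLp g p μ)
    (hfg : ∀ i, ∀ᵐ a ∂μ, ‖f i a‖ ≤ g a) (hf₀g : ∀ᵐ a ∂μ, ‖f₀ a‖ ≤ g a)
    (hlim : ∀ᵐ a ∂μ, Tendsto (f · a) l (𝓝 (f₀ a))) :
    Tendsto (fun i ↦ eLpNorm (f i - f₀) p μ) l (𝓝 0) := by
  have hp_pos : 0 < p.toReal := ENNReal.toReal_pos hp₀ hp
  have hg2 : MemLp (fun a ↦ 2 * g a) p μ := hg.const_mul 2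
  have hbound (i : ι) : ∀ᵐ a ∂μ, ‖(f i - f₀) a‖ₑ ^ p.toReal ≤ ‖2 * g a‖ₑ ^ p.toReal := by
    filter_upwards [hfg i, hf₀g] with a hfa hf₀a
    refine ENNReal.rpow_le_rpow (enorm_le_iff_norm_le.2 ?_) hp_pos.le
    calc ‖f i a - f₀ a‖ ≤ g a + g a := (norm_sub_le _ _).trans (add_le_add hfa hf₀a)
      _ = 2 * g a := (two_mul _).symm
      _ ≤ ‖2 * g a‖ := Real.le_norm_self _
  have hfin : ∫⁻ a, ‖2 * g a‖ₑ ^ p.toReal ∂μ ≠ ∞ :=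
    (lintegral_rpow_enorm_lt_top_of_eLpNorm_lt_top hp₀ hp hg2.2).ne
  have hlim_zero : ∀ᵐ a ∂μ, Tendsto (fun i ↦ ‖(f i - f₀) a‖ₑ ^ p.toReal) l (𝓝 0) := by
    filter_upwards [hlim] with a ha
    have hsub : Tendsto (fun i ↦ ‖f i a - f₀ a‖ₑ) l (𝓝 0) := by
      simpa using (ha.sub_const (f₀ a)).enorm
    simpa [hp_pos] using hsub.ennrpow_const p.toReal
  have hlintegral := tendsto_lintegral_filter_of_dominated_convergence' _
    (.of_forall fun i ↦ ((hf i).sub hf₀).enorm.pow_const _) (.of_forall hbound) hfin hlim_zero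
  simpa [eLpNorm_eq_lintegral_rpow_enorm_toReal hp₀ hp, hp_pos] using
    hlintegral.ennrpow_const (1 / p.toReal)

theorem continuous_toLp_of_dominated [TopologicalSpace X] [FirstCountableTopology X]
    [Fact (1 ≤ p)] {f : X → α → E} (hp : p ≠ ∞) (hf : ∀ x, MemLp (f x) p μ) (hg : MemLp g p μ)
    (hfg : ∀ x, ∀ᵐ a ∂μ, ‖f x a‖ ≤ g a) (hcont : ∀ᵐ a ∂μ, Continuous (f · a)) :
    Continuous fun x ↦ (hf x).toLp (f x) := by
  refine continuous_iff_continuousAt.2 fun x₀ ↦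
    (Lp.tendsto_Lp_iff_tendsto_eLpNorm'' f hf _ (hf x₀)).2 ?_
  exact tendsto_eLpNorm_sub_zero_of_dominated (zero_lt_one.trans_le Fact.out).ne' hp
    (fun x ↦ (hf x).1) (hf x₀).1 hg hfg (hfg x₀) (hcont.mono fun a ha ↦ ha.tendsto x₀)

end DominatedConvergence

section UniformApproximation

variable {X Y : Type*} [TopologicalSpace X] [MeasurableSpace X] [OpensMeasurableSpace X]
  [PseudoMetricSpace Y] [Nonempty Y]

theorem exists_simpleFunc_dist_lt_of_isCompact {s : Set X} (hs : IsCompact s) {f : X → Y}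
    (hf : Continuous f) {ε : ℝ} (hε : 0 < ε) :
    ∃ φ : SimpleFunc X Y, ∀ x ∈ s, dist (f x) (φ x) < ε := by
  suffices h : ∃ U, s ⊆ U ∧ MeasurableSet U ∧
      ∃ φ : SimpleFunc X Y, ∀ x ∈ U, dist (f x) (φ x) < ε by
    obtain ⟨U, hsU, -, φ, hφ⟩ := h
    exact ⟨φ, fun x hx ↦ hφ x (hsU hx)⟩
  refine hs.induction_on ⟨∅, subset_rfl, .empty, .const X (Classical.arbitrary Y), by simp⟩
    (fun s t hst ⟨U, htU, hU⟩ ↦ ⟨U, hst.trans htU, hU⟩) ?_ ?_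
  · rintro s t ⟨U, hsU, hU, φ, hφ⟩ ⟨V, htV, hV, ψ, hψ⟩
    refine ⟨U ∪ V, union_subset_union hsU htV, hU.union hV, φ.piecewise U hU ψ, fun x hx ↦ ?_⟩
    by_cases hxU : x ∈ U
    · simpa [hxU] using hφ x hxU
    · simpa [hxU] using hψ x (hx.resolve_left hxU)
  · intro x _
    have hopen : IsOpen (f ⁻¹' Metric.ball (f x) ε) := Metric.isOpen_ball.preimage hf
    exact ⟨_, mem_nhdsWithin_of_mem_nhds (hopen.mem_nhds (Metric.mem_ball_self hε)), _, subset_rfl,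
      hopen.measurableSet, .const X (f x), fun _ hy ↦ hy⟩

end UniformApproximation

section LpEval

variable {α 𝕜 E F : Type*} [MeasurableSpace α] {μ : Measure α} [NontriviallyNormedField 𝕜]
  [NormedAddCommGroup E] [NormedSpace 𝕜 E] [NormedAddCommGroup F] [NormedSpace 𝕜 F]
  {p : ℝ≥0∞}

theorem memLp_smul_of_memLp_top {h : α → 𝕜} {K : α → E} (hh : MemLp h p μ)
    (hK : MemLp K ∞ μ) : MemLp (fun a ↦ h a • K a) p μ :=
  hK.smul hh

variable [Fact (1 ≤ p)]

/-- The operator `E → L^p(μ; F)`, `v ↦ (a ↦ g a v)`, attached to an operator-valued `L^p`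
function `g`, as a continuous linear function of `g`. -/
noncomputable def lpEval : Lp (E →L[𝕜] F) p μ →L[𝕜] E →L[𝕜] Lp F p μ :=
  ((ContinuousLinearMap.apply 𝕜 F).compLpL₂ p μ).flip

theorem coeFn_lpEval_toLp {g : α → E →L[𝕜] F} (hg : MemLp g p μ) (v : E) :
    lpEval (hg.toLp g) v =ᵐ[μ] fun a ↦ g a v := by
  filter_upwards [(ContinuousLinearMap.apply 𝕜 F v).coeFn_compLp (hg.toLp g), hg.coeFn_toLp]
    with a heval hga
  exact heval.trans (by rw [hga]; rfl)

theorem isCompactOperator_lpEval_smul_simpleFunc [LocallyCompactSpace F] {h : α → 𝕜}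
    (hh : MemLp h p μ) (φ : SimpleFunc α (E →L[𝕜] F)) :
    IsCompactOperator (lpEval ((memLp_smul_of_memLp_top hh (φ.memLp_top μ)).toLp _)) := by
  induction φ using SimpleFunc.induction with
  | @const c s hs =>
    -- The operator factors through `c : E → F`, whose codomain is locally compact.
    have hid : MemLp (fun a ↦ s.indicator h a • ContinuousLinearMap.id 𝕜 F) p μ :=
      memLp_smul_of_memLp_top (hh.indicator hs) (memLp_top_const _)
    have hφ := memLp_smul_of_memLp_top hh
      ((SimpleFunc.piecewise s hs (.const α c) (.const α 0)).memLp_top μ)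
    have hfactor : lpEval (hφ.toLp _) = (lpEval (hid.toLp _)).comp c := by
      refine ContinuousLinearMap.ext fun v ↦ Lp.ext ?_
      filter_upwards [coeFn_lpEval_toLp hφ v, coeFn_lpEval_toLp hid (c v)] with a hleft hright
      rw [hleft, ContinuousLinearMap.comp_apply, hright]
      by_cases ha : a ∈ s <;> simp [ha]
    rw [hfactor]
    exact (isCompactOperator_of_locallyCompactSpace_rng (lpEval (hid.toLp _))).comp_clm c
  | @add φ ψ _ hφ hψ =>
    have hsum := hφ.add hψ
    rw [← FunLike.coe_add, ← map_add, ← MemLp.toLp_add] at hsum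
    simpa only [SimpleFunc.coe_add, Pi.add_def, smul_add] using hsum

theorem isCompactOperator_lpEval_of_forall_eLpNorm_sub_lt [CompleteSpace F]
    {g : α → E →L[𝕜] F} (hg : MemLp g p μ)
    (happrox : ∀ ε ≠ 0, ∃ (g' : α → E →L[𝕜] F) (hg' : MemLp g' p μ),
      IsCompactOperator (lpEval (hg'.toLp g')) ∧ eLpNorm (g - g') p μ < ε) :
    IsCompactOperator (lpEval (hg.toLp g)) := by
  have hclosed : IsClosed {g : Lp (E →L[𝕜] F) p μ | IsCompactOperator (lpEval g)} :=
    (isClosed_setOfPred_isCompactOperator (σ₁₂ := RingHom.id 𝕜)).preimage lpEval.continuous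
  refine hclosed.closure_subset (EMetric.mem_closure_iff.2 fun ε hε ↦ ?_)
  obtain ⟨g', hg', hcompact, hlt⟩ := happrox ε hε.ne'
  exact ⟨hg'.toLp g', hcompact, (Lp.edist_toLp_toLp g g' hg hg').trans_lt hlt⟩

variable {X : Type*} [TopologicalSpace X] [MeasurableSpace X] [OpensMeasurableSpace X]
  {ν : Measure X} {h : X → 𝕜} {K : X → E →L[𝕜] F} [ProperSpace F]

theorem isCompactOperator_lpEval_smul_of_hasCompactSupport (hh : MemLp h p ν)
    (hsupp : HasCompactSupport h) (hK : Continuous K) (hK_bdd : MemLp K ∞ ν) :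
    IsCompactOperator (lpEval ((memLp_smul_of_memLp_top hh hK_bdd).toLp _)) := by
  refine isCompactOperator_lpEval_of_forall_eLpNorm_sub_lt _ fun ε hε ↦ ?_
  obtain ⟨δ, hδ, hδε⟩ := ENNReal.exists_nnreal_pos_mul_lt hh.2.ne hε
  obtain ⟨φ, hφ⟩ := exists_simpleFunc_dist_lt_of_isCompact hsupp.isCompact hK hδ
  refine ⟨_, _, isCompactOperator_lpEval_smul_simpleFunc hh φ, ?_⟩
  refine (eLpNorm_le_nnreal_smul_eLpNorm_of_ae_le_mul (.of_forall fun x ↦ ?_) p).trans_lt hδε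
  rw [← NNReal.coe_le_coe]
  by_cases hx : x ∈ tsupport h
  · simpa [← smul_sub, norm_smul, mul_comm (δ : ℝ), ← dist_eq_norm] using
      mul_le_mul_of_nonneg_left (hφ x hx).le (norm_nonneg (h x))
  · simp [image_eq_zero_of_notMem_tsupport hx]

theorem isCompactOperator_lpEval_smul (hh : MemLp h p ν)
    (happrox : ∀ ε ≠ 0, ∃ g, HasCompactSupport g ∧ eLpNorm (h - g) p ν ≤ ε ∧ MemLp g p ν)
    (hK : Continuous K) (hK_bdd : MemLp K ∞ ν) :
    IsCompactOperator (lpEval ((memLp_smul_of_memLp_top hh hK_bdd).toLp _)) := by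
  refine isCompactOperator_lpEval_of_forall_eLpNorm_sub_lt _ fun ε hε ↦ ?_
  obtain ⟨δ, hδ, hδε⟩ := ENNReal.exists_nnreal_pos_mul_lt hK_bdd.2.ne hε
  obtain ⟨g, hg_supp, hgδ, hg⟩ := happrox δ (mod_cast hδ.ne')
  refine ⟨_, _, isCompactOperator_lpEval_smul_of_hasCompactSupport hg hg_supp hK hK_bdd, ?_⟩
  calc eLpNorm (h • K - g • K) p ν
      = eLpNorm ((h - g) • K) p ν := by rw [sub_smul]
    _ ≤ eLpNorm (h - g) p ν * eLpNorm K ∞ ν :=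
      eLpNorm_smul_le_mul_eLpNorm hK_bdd.1 (hh.1.sub hg.1)
    _ ≤ δ * eLpNorm K ∞ ν := by gcongr
    _ < ε := hδε

end LpEval

section CompactSupportApproximation

variable {X E : Type*} [TopologicalSpace X] [T2Space X] [MeasurableSpace X]
  {μ : Measure X} [NormedAddCommGroup E] {p : ℝ≥0∞} {h : X → E}

theorem exists_hasCompactSupport_eLpNorm_top_sub_le [OpensMeasurableSpace X] (hh : MemLp h ∞ μ)
    (hvanish : Tendsto h (cocompact X) (𝓝 0)) {ε : ℝ≥0∞} (hε : ε ≠ 0) :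
    ∃ g, HasCompactSupport g ∧ eLpNorm (h - g) ∞ μ ≤ ε ∧ MemLp g ∞ μ := by
  have hsmall : ∀ᶠ x in cocompact X, ‖h x‖ₑ < ε :=
    hvanish.enorm.eventually_lt_const (by simpa using hε.bot_lt)
  obtain ⟨s, hs, hsε⟩ := mem_cocompact.1 hsmall
  refine ⟨s.indicator h, .intro hs fun x hx ↦ indicator_of_notMem hx h, ?_,
    hh.indicator hs.measurableSet⟩
  rw [eLpNorm_exponent_top]
  refine eLpNormEssSup_le_of_ae_enorm_bound (.of_forall fun x ↦ ?_)
  by_cases hx : x ∈ s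
  · simp [hx]
  · simpa [hx] using (mem_ofPred.1 (hsε hx)).le

theorem exists_hasCompactSupport_eLpNorm_sub_le [BorelSpace X] [WeaklyLocallyCompactSpace X]
    [NormalSpace X] [μ.Regular] [NormedSpace ℝ E] (hh : MemLp h p μ)
    (hvanish : p = ∞ → Tendsto h (cocompact X) (𝓝 0)) {ε : ℝ≥0∞} (hε : ε ≠ 0) :
    ∃ g, HasCompactSupport g ∧ eLpNorm (h - g) p μ ≤ ε ∧ MemLp g p μ := by
  rcases eq_or_ne p ∞ with rfl | hp
  · exact exists_hasCompactSupport_eLpNorm_top_sub_le hh (hvanish rfl) hε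
  · obtain ⟨g, hg_supp, hgε, -, hg⟩ := hh.exists_hasCompactSupport_eLpNorm_sub_le hp hε
    exact ⟨g, hg_supp, hgε, hg⟩

end CompactSupportApproximation

section FourierIntegral

variable {𝕜 V W E : Type*} [CommRing 𝕜] [TopologicalSpace 𝕜] [IsTopologicalRing 𝕜]
  [AddCommGroup V] [Module 𝕜 V] [TopologicalSpace V] [MeasurableSpace V] [BorelSpace V]
  [AddCommGroup W] [Module 𝕜 W] [TopologicalSpace W]
  [NormedAddCommGroup E] [NormedSpace ℂ E]
  {e : AddChar 𝕜 Circle} {μ : Measure V} {L : V →ₗ[𝕜] W →ₗ[𝕜] 𝕜} {p q q' : ℝ≥0∞} {h : V → ℂ}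

theorem memLp_addChar_smul (he : Continuous e) (hL : Continuous fun x : V × W ↦ L x.1 x.2)
    {h : V → E} (hh : MemLp h p μ) (w : W) : MemLp (fun v ↦ e (-L v w) • h v) p μ := by
  have hchar : Continuous fun v ↦ e (-L v w) :=
    he.comp (hL.comp (Continuous.prodMk_left w)).neg
  exact hh.of_le (hchar.aestronglyMeasurable.smul hh.1)
    (.of_forall fun v ↦ (Circle.norm_smul _ _).le)

theorem continuous_toLp_addChar_smul [FirstCountableTopology W] [Fact (1 ≤ p)] (hp : p ≠ ∞)
    (he : Continuous e) (hL : Continuous fun x : V × W ↦ L x.1 x.2) {h : V → E}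
    (hh : MemLp h p μ) : Continuous fun w ↦ (memLp_addChar_smul he hL hh w).toLp _ := by
  refine continuous_toLp_of_dominated hp _ hh.norm
    (fun w ↦ .of_forall fun v ↦ (Circle.norm_smul _ _).le) (.of_forall fun v ↦ ?_)
  have hchar : Continuous fun w ↦ e (-L v w) := he.comp (hL.comp (Continuous.prodMk_right v)).neg
  exact hchar.smul continuous_const

variable [Fact (1 ≤ q)] [Fact (1 ≤ q')] [q.HolderConjugate q']

section Kernel

variable [CompleteSpace E]

/-- The functional `f ↦ 𝓕(h f)(w)` on `L^q'`, for `h ∈ L^q` and the Fourier integral `𝓕` attached to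
`e` and `L`. -/
noncomputable def fourierIntegralMulCLM (he : Continuous e)
    (hL : Continuous fun x : V × W ↦ L x.1 x.2) (hh : MemLp h q μ) (w : W) :
    Lp E q' μ →L[ℂ] E :=
  (ContinuousLinearMap.lsmul ℂ ℂ).lpPairing μ q q' ((memLp_addChar_smul he hL hh w).toLp _)

theorem fourierIntegralMulCLM_apply (he : Continuous e)
    (hL : Continuous fun x : V × W ↦ L x.1 x.2) (hh : MemLp h q μ) (w : W) (f : Lp E q' μ) :
    fourierIntegralMulCLM he hL hh w f =
      VectorFourier.fourierIntegral e μ L (fun v ↦ h v • f v) w := by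
  rw [fourierIntegralMulCLM, ContinuousLinearMap.lpPairing_eq_integral]
  refine integral_congr_ae ?_
  filter_upwards [(memLp_addChar_smul he hL hh w).coeFn_toLp] with v hv
  rw [hv, ContinuousLinearMap.lsmul_apply, smul_assoc]

theorem continuous_fourierIntegralMulCLM [FirstCountableTopology W] (hq : q ≠ ∞)
    (he : Continuous e) (hL : Continuous fun x : V × W ↦ L x.1 x.2) (hh : MemLp h q μ) :
    Continuous (fourierIntegralMulCLM (E := E) (q' := q') he hL hh) :=
  ((ContinuousLinearMap.lsmul ℂ ℂ).lpPairing μ q q').continuous.comp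
    (continuous_toLp_addChar_smul hq he hL hh)

theorem exists_norm_fourierIntegralMulCLM_le (he : Continuous e)
    (hL : Continuous fun x : V × W ↦ L x.1 x.2) (hh : MemLp h q μ) :
    ∃ C, ∀ w, ‖fourierIntegralMulCLM (E := E) (q' := q') he hL hh w‖ ≤ C := by
  refine ⟨‖(ContinuousLinearMap.lsmul ℂ ℂ (E := E)).lpPairing μ q q'‖ * ‖hh.toLp h‖, fun w ↦
    (ContinuousLinearMap.le_opNorm _ _).trans ?_⟩
  gcongr
  rw [Lp.norm_toLp, Lp.norm_toLp]
  exact (congrArg _ (eLpNorm_congr_norm_ae (.of_forall fun v ↦ Circle.norm_smul _ _))).le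

end Kernel

theorem exists_isCompactOperator_smul_fourierIntegral [ProperSpace E]
    [SecondCountableTopology W] [MeasurableSpace W] [OpensMeasurableSpace W] {ν : Measure W}
    [Fact (1 ≤ p)] (he : Continuous e) (hL : Continuous fun x : V × W ↦ L x.1 x.2) (hq : q ≠ ∞)
    (hh : MemLp h q μ) {g : W → ℂ} (hg : MemLp g p ν)
    (hg_approx : ∀ ε ≠ 0, ∃ g', HasCompactSupport g' ∧ eLpNorm (g - g') p ν ≤ ε ∧ MemLp g' p ν) :
    ∃ T : Lp E q' μ →L[ℂ] Lp E p ν, IsCompactOperator T ∧ ∀ f, T f =ᵐ[ν] fun w ↦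
      g w • VectorFourier.fourierIntegral e μ L (fun v ↦ h v • f v) w := by
  have hK := continuous_fourierIntegralMulCLM (E := E) (q' := q') hq he hL hh
  obtain ⟨C, hC⟩ := exists_norm_fourierIntegralMulCLM_le (E := E) (q' := q') he hL hh
  have hK_bdd := memLp_top_of_bound (μ := ν) hK.aestronglyMeasurable C (.of_forall hC)
  refine ⟨_, isCompactOperator_lpEval_smul hg hg_approx hK hK_bdd, fun f ↦ ?_⟩
  filter_upwards [coeFn_lpEval_toLp (memLp_smul_of_memLp_top hg hK_bdd) f] with w hw
  rw [hw, smul_apply, fourierIntegralMulCLM_apply]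

end FourierIntegral

section ExpDecay

variable {V E : Type*} [NormedAddCommGroup V] [NormedAddCommGroup E] {c C : ℝ} {h : V → E}

theorem tendsto_cocompact_zero_of_norm_le_exp [ProperSpace V] (hc : 0 < c)
    (hdecay : ∀ x, ‖h x‖ ≤ C * Real.exp (-c * ‖x‖)) : Tendsto h (cocompact V) (𝓝 0) := by
  refine squeeze_zero_norm hdecay ?_
  have hexp := (Real.tendsto_exp_neg_atTop_nhds_zero.comp
    ((tendsto_norm_cocompact_atTop (E := V)).const_mul_atTop hc)).const_mul C
  simpa [Function.comp_def] using hexp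

variable [NormedSpace ℝ V] [FiniteDimensional ℝ V] [MeasurableSpace V] [BorelSpace V]
  {μ : Measure V} [μ.IsAddHaarMeasure]

theorem integrable_exp_neg_mul_norm (hc : 0 < c) :
    Integrable (fun x : V ↦ Real.exp (-c * ‖x‖)) μ := by
  have hcont : Continuous fun x : V ↦ Real.exp (-c * (1 + ‖x‖)) := by fun_prop
  have htendsto : Tendsto (fun x : V ↦ 1 + ‖x‖) (cocompact V) atTop :=
    tendsto_atTop_add_const_left _ 1 (tendsto_norm_cocompact_atTop (E := V))
  have hdecay := (isLittleO_exp_neg_mul_rpow_atTop hc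
    (-(Module.finrank ℝ V + 1 : ℝ))).isBigO.comp_tendsto htendsto
  have hint : Integrable (fun x : V ↦ Real.exp (-c * (1 + ‖x‖))) μ :=
    hcont.locallyIntegrable.integrable_of_isBigO_cocompact hdecay
      ((integrable_one_add_norm (lt_add_one _)).integrableAtFilter _)
  refine (hint.const_mul (Real.exp c)).congr (.of_forall fun x ↦ ?_)
  simp only [← Real.exp_add]
  ring_nf

theorem memLp_exp_neg_mul_norm (hc : 0 < c) (p : ℝ≥0∞) :
    MemLp (fun x : V ↦ Real.exp (-c * ‖x‖)) p μ := by
  have hcont : Continuous fun x : V ↦ Real.exp (-c * ‖x‖) := by fun_prop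
  have hmeas := hcont.aestronglyMeasurable (μ := μ)
  rcases eq_or_ne p 0 with rfl | hp₀
  · exact memLp_zero_iff_aestronglyMeasurable.2 hmeas
  rcases eq_or_ne p ∞ with rfl | hp
  · refine memLp_top_of_bound hmeas 1 (.of_forall fun x ↦ ?_)
    simpa using mul_nonneg hc.le (norm_nonneg x)
  · rw [← integrable_norm_rpow_iff hmeas hp₀ hp]
    have hint := integrable_exp_neg_mul_norm (μ := μ) (mul_pos hc (ENNReal.toReal_pos hp₀ hp))
    simpa [← Real.exp_mul, mul_right_comm] using hint

theorem memLp_of_norm_le_exp (hh : AEStronglyMeasurable h μ) (hc : 0 < c)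
    (hdecay : ∀ x, ‖h x‖ ≤ C * Real.exp (-c * ‖x‖)) (p : ℝ≥0∞) : MemLp h p μ :=
  ((memLp_exp_neg_mul_norm hc p).const_mul C).of_le hh
    (.of_forall fun x ↦ (hdecay x).trans (Real.le_norm_self _))

end ExpDecay

theorem fourierIntegral_probChar_innerₗ {ι : Type*} [Fintype ι] (g : EuclideanSpace ℝ ι → ℂ)
    (x : EuclideanSpace ℝ ι) :
    VectorFourier.fourierIntegral Real.probChar volume (innerₗ (EuclideanSpace ℝ ι)) g x =
      ∫ w, Complex.exp (-Complex.I * ∑ i, (x i : ℂ) * (w i : ℂ)) * g w := by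
  rw [VectorFourier.fourierIntegral_probChar]
  refine integral_congr_ae (.of_forall fun w ↦ ?_)
  simp only [smul_eq_mul, innerₗ_apply_apply, PiLp.inner_apply, RCLike.inner_apply, conj_trivial,
    Complex.ofReal_sum, Complex.ofReal_mul, neg_mul, mul_comm Complex.I]

theorem stmt_18_general {k : ℕ} {h₁ h₂ : EuclideanSpace ℝ (Fin k) → ℂ} {p q q' : ℝ≥0∞}
    [Fact (1 ≤ p)] [Fact (1 ≤ q)] [Fact (1 ≤ q')] [q.HolderConjugate q'] (hq : q ≠ ∞)
    (hh₁ : MemLp h₁ p volume) (hvanish : p = ∞ → Tendsto h₁ (cocompact _) (𝓝 0))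
    (hh₂ : MemLp h₂ q volume)
    {F : (EuclideanSpace ℝ (Fin k) → ℂ) → EuclideanSpace ℝ (Fin k) → ℂ}
    (hF : ∀ (g : EuclideanSpace ℝ (Fin k) → ℂ) (x : EuclideanSpace ℝ (Fin k)),
      F g x = (((2 * Real.pi) ^ (-(k : ℝ) / 2) : ℝ) : ℂ) *
        ∫ w : EuclideanSpace ℝ (Fin k),
          Complex.exp (-Complex.I * ∑ i, (x i : ℂ) * (w i : ℂ)) * g w) :
    ∃ T : Lp ℂ q' (volume : Measure (EuclideanSpace ℝ (Fin k))) →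
        Lp ℂ p (volume : Measure (EuclideanSpace ℝ (Fin k))),
      IsLinearMap ℂ T ∧ IsCompactOperator T ∧
        ∀ f, T f =ᵐ[volume] fun x ↦ h₁ x * F (fun w ↦ h₂ w * f w) x := by
  obtain ⟨T, hT, hT_apply⟩ := exists_isCompactOperator_smul_fourierIntegral (E := ℂ) (q' := q')
    Real.continuous_probChar (L := innerₗ (EuclideanSpace ℝ (Fin k))) continuous_inner hq hh₂ hh₁
    fun ε hε ↦ exists_hasCompactSupport_eLpNorm_sub_le hh₁ hvanish hε
  let c : ℂ := ((2 * Real.pi) ^ (-(k : ℝ) / 2) : ℝ)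
  refine ⟨c • T, (c • T).toLinearMap.isLinear, hT.smul c, fun f ↦ ?_⟩
  filter_upwards [Lp.coeFn_smul c (T f), hT_apply f] with x hsmul hx
  rw [Pi.smul_apply, hsmul, Pi.smul_apply, hx, hF, ← fourierIntegral_probChar_innerₗ]
  simp only [smul_eq_mul, mul_left_comm, c]

/-- For continuous exponentially decaying `h₁, h₂` on `ℝ^k`, the
operator `f ↦ h₁ · 𝓕(h₂ · f)` is well defined and compact from `L²(ℝ^k)` to
`L^p(ℝ^k)` for every `p ∈ [1, ∞]`.  (The hypothesis `1 ≤ p` is recorded as a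
`Fact` so that the `L^p` norm topology is available.) -/
theorem stmt_18
    (k : ℕ) (hk : 1 ≤ k)
    (h₁ h₂ : EuclideanSpace ℝ (Fin k) → ℂ)
    (hcont₁ : Continuous h₁) (hcont₂ : Continuous h₂)
    (hdecay : ∃ C > (0 : ℝ), ∃ c > (0 : ℝ), ∀ x : EuclideanSpace ℝ (Fin k),
      ‖h₁ x‖ ≤ C * Real.exp (-c * ‖x‖) ∧ ‖h₂ x‖ ≤ C * Real.exp (-c * ‖x‖))
    (F : (EuclideanSpace ℝ (Fin k) → ℂ) → EuclideanSpace ℝ (Fin k) → ℂ)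
    (hF : ∀ (g : EuclideanSpace ℝ (Fin k) → ℂ) (x : EuclideanSpace ℝ (Fin k)),
      F g x = (((2 * Real.pi) ^ (-(k : ℝ) / 2) : ℝ) : ℂ) *
        ∫ w : EuclideanSpace ℝ (Fin k),
          Complex.exp (-Complex.I * ∑ i, (x i : ℂ) * (w i : ℂ)) * g w) :
    ∀ (p : ENNReal) [Fact (1 ≤ p)],
      ∃ T : Lp ℂ 2 (volume : Measure (EuclideanSpace ℝ (Fin k))) →
            Lp ℂ p (volume : Measure (EuclideanSpace ℝ (Fin k))),
        IsLinearMap ℂ T ∧ IsCompactOperator T ∧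
        ∀ f : Lp ℂ 2 (volume : Measure (EuclideanSpace ℝ (Fin k))),
          (T f : EuclideanSpace ℝ (Fin k) → ℂ) =ᵐ[volume]
            fun x => h₁ x * F (fun w => h₂ w * (f : EuclideanSpace ℝ (Fin k) → ℂ) w) x := by
  obtain ⟨C, -, c, hc, hbound⟩ := hdecay
  exact fun p _ ↦ stmt_18_general ENNReal.ofNat_ne_top
    (memLp_of_norm_le_exp hcont₁.aestronglyMeasurable hc (fun x ↦ (hbound x).1) p)
    (fun _ ↦ tendsto_cocompact_zero_of_norm_le_exp hc fun x ↦ (hbound x).1)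
    (memLp_of_norm_le_exp hcont₂.aestronglyMeasurable hc (fun x ↦ (hbound x).2) 2) hF
end
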